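/- arXiv:1410.1000 — 6 statements merged into one kernel-verified Lean document; each statement's English description precedes it below -/
import Mathlib

section
/- Let T > 0, k ≥ 0, λ > 0, and let φ : [0,T] → ℝ be continuous and satisfy the integral equation ∫₀^T min(k+t, k+s) φ(s) ds = λ φ(t) for all t ∈ [0,T]. Then φ is twice continuously differentiable on [0,T] and satisfies: λ φ''(t) = −φ(t) for all t ∈ [0,T], φ'(T) = 0, λ φ(0) = k ∫₀^T φ(s) ds, and λ φ'(0) = ∫₀^T φ(s) ds. -/
open MeasureTheory intervalIntegral

/-!
Writing `min (k + t) (k + s) = k + ∫ u in 0..t, 𝟙 (u ≤ s)` for `s, t ≥ 0`, Fubini's theorem turns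
the covariance operator into a double integration,
`∫ s in 0..T, min (k + t) (k + s) * φ s = k * ∫ s in 0..T, φ s + ∫ u in 0..t, ∫ s in u..T, φ s`.
It maps integrable functions to `C¹` functions, the derivative at `t` being `∫ s in t..T, φ s`. An
integrable eigenfunction is therefore continuous, so that this derivative can itself be
differentiated, and the boundary conditions can be read off the formulas.
-/

section IntervalIntegral

variable {E : Type*} [NormedAddCommGroup E] {a b t : ℝ} {f : ℝ → E}

theorem integrableOn_indicator_fst_le_snd (hf : IntervalIntegrable f volume a b) (c d : ℝ) :
    IntegrableOn ({p : ℝ × ℝ | p.1 ≤ p.2}.indicator fun p => f p.2)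
      (Set.uIoc c d ×ˢ Set.uIoc a b) := by
  have : IsFiniteMeasure (volume.restrict (Set.uIoc c d)) :=
    isFiniteMeasure_restrict.mpr measure_Ioc_lt_top.ne
  rw [IntegrableOn, Measure.volume_eq_prod, ← Measure.prod_restrict]
  exact ((intervalIntegrable_iff.mp hf).integrable.comp_snd _).indicator
    (measurableSet_le measurable_fst measurable_snd)

variable [NormedSpace ℝ E]

theorem hasDerivWithinAt_Icc_integral_right [CompleteSpace E] (hf : ContinuousOn f (Set.Icc a b))
    (ht : t ∈ Set.Icc a b) :
    HasDerivWithinAt (fun u => ∫ s in a..u, f s) (f t) (Set.Icc a b) t := by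
  have : Fact (t ∈ Set.Icc a b) := ⟨ht⟩ -- needed to synthesise `FTCFilter`
  exact integral_hasDerivWithinAt_right
    ((hf.mono (Set.Icc_subset_Icc_right ht.2)).intervalIntegrable_of_Icc ht.1)
    (hf.stronglyMeasurableAtFilter_nhdsWithin measurableSet_Icc t) (hf t ht)

theorem hasDerivWithinAt_Icc_integral_left [CompleteSpace E] (hf : ContinuousOn f (Set.Icc a b))
    (ht : t ∈ Set.Icc a b) :
    HasDerivWithinAt (fun u => ∫ s in u..b, f s) (-f t) (Set.Icc a b) t := by
  have : Fact (t ∈ Set.Icc a b) := ⟨ht⟩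
  exact integral_hasDerivWithinAt_left
    ((hf.mono (Set.Icc_subset_Icc_left ht.1)).intervalIntegrable_of_Icc ht.2)
    (hf.stronglyMeasurableAtFilter_nhdsWithin measurableSet_Icc t) (hf t ht)

theorem integral_indicator_Ici (hat : a ≤ t) (htb : t ≤ b) :
    ∫ s in a..b, (Set.Ici t).indicator f s = ∫ s in t..b, f s := by
  have h : Set.Icc a b ∩ Set.Ici t = Set.Icc t b := by
    rw [← Set.Ici_inter_Iic, Set.inter_right_comm, Set.Ici_inter_Ici, sup_eq_right.mpr hat,
      Set.Ici_inter_Iic]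
  rw [integral_of_le (hat.trans htb), integral_of_le htb, ← integral_Icc_eq_integral_Ioc,
    ← integral_Icc_eq_integral_Ioc, setIntegral_indicator measurableSet_Ici, h]

theorem integral_indicator_Iic_const [CompleteSpace E] {s : ℝ} (hat : a ≤ t) (has : a ≤ s) (c : E) :
    ∫ u in a..t, (Set.Iic s).indicator (fun _ => c) u = (min t s - a) • c := by
  rw [integral_of_le hat, setIntegral_indicator measurableSet_Iic, Set.Ioc_inter_Iic,
    setIntegral_const, Real.volume_real_Ioc_of_le (le_min hat has)]

theorem integral_min_sub_smul [CompleteSpace E] (hf : IntervalIntegrable f volume a b)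
    (ht : t ∈ Set.Icc a b) :
    ∫ s in a..b, (min t s - a) • f s = ∫ u in a..t, ∫ s in u..b, f s := by
  calc ∫ s in a..b, (min t s - a) • f s
      = ∫ s in a..b, ∫ u in a..t, (Set.Iic s).indicator (fun _ => f s) u := by
        refine integral_congr fun s hs => ?_
        rw [Set.uIcc_of_le (ht.1.trans ht.2)] at hs
        exact (integral_indicator_Iic_const ht.1 hs.1 (f s)).symm
    _ = ∫ u in a..t, ∫ s in a..b, (Set.Ici u).indicator f s :=
        (intervalIntegral_intervalIntegral_swap (F := fun u s => (Set.Ici u).indicator f s)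
          (integrableOn_indicator_fst_le_snd hf a t)).symm
    _ = ∫ u in a..t, ∫ s in u..b, f s := by
        refine integral_congr fun u hu => ?_
        rw [Set.uIcc_of_le ht.1] at hu
        exact integral_indicator_Ici hu.1 (hu.2.trans ht.2)

end IntervalIntegral

section GSPWiener

variable {E : Type*} [NormedAddCommGroup E] [NormedSpace ℝ E] {k T t : ℝ} {f : ℝ → E}

/-- The covariance operator of the GSP-Wiener process on `[0, T]`, the integral operator with kernel
`min (k + t) (k + s)`. It acts on functions with values in a real normed space. -/
noncomputable def gspWienerCovariance (k T : ℝ) (f : ℝ → E) (t : ℝ) : E :=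
  ∫ s in (0 : ℝ)..T, min (k + t) (k + s) • f s

theorem gspWienerCovariance_zero (hT : 0 ≤ T) :
    gspWienerCovariance k T f 0 = k • ∫ s in (0 : ℝ)..T, f s := by
  rw [gspWienerCovariance, ← intervalIntegral.integral_smul]
  refine integral_congr fun s hs => ?_
  rw [Set.uIcc_of_le hT] at hs
  simp only [add_zero, min_eq_left (le_add_of_nonneg_right hs.1)]

theorem gspWienerCovariance_eq_add_integral [CompleteSpace E] (hf : IntervalIntegrable f volume 0 T)
    (ht : t ∈ Set.Icc 0 T) :
    gspWienerCovariance k T f t =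
      k • (∫ s in (0 : ℝ)..T, f s) + ∫ u in (0 : ℝ)..t, ∫ s in u..T, f s := by
  have hkf : IntervalIntegrable (fun s => k • f s) volume 0 T := hf.smul k
  have hmin : IntervalIntegrable (fun s => min t s • f s) volume 0 T :=
    hf.continuousOn_smul (continuous_const.min continuous_id).continuousOn
  calc gspWienerCovariance k T f t
      = ∫ s in (0 : ℝ)..T, (k • f s + min t s • f s) := by
        simp only [gspWienerCovariance, min_add_add_left, add_smul]
    _ = k • (∫ s in (0 : ℝ)..T, f s) + ∫ s in (0 : ℝ)..T, min t s • f s := by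
        rw [integral_add hkf hmin, intervalIntegral.integral_smul]
    _ = k • (∫ s in (0 : ℝ)..T, f s) + ∫ u in (0 : ℝ)..t, ∫ s in u..T, f s := by
        simpa only [sub_zero] using congrArg _ (integral_min_sub_smul hf ht)

theorem hasDerivWithinAt_gspWienerCovariance [CompleteSpace E]
    (hf : IntervalIntegrable f volume 0 T) (ht : t ∈ Set.Icc 0 T) :
    HasDerivWithinAt (gspWienerCovariance k T f) (∫ s in t..T, f s) (Set.Icc 0 T) t := by
  have htail : ContinuousOn (fun u => ∫ s in u..T, f s) (Set.Icc 0 T) := by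
    rw [← Set.uIcc_of_le (ht.1.trans ht.2)]
    exact continuousOn_primitive_interval_left (by rwa [← intervalIntegrable_iff'])
  exact ((hasDerivWithinAt_Icc_integral_right htail ht).const_add _).congr
    (fun _ hu => gspWienerCovariance_eq_add_integral hf hu)
    (gspWienerCovariance_eq_add_integral hf ht)

theorem gsp_wiener_eigenfunction_ode_general {𝕜 : Type*} [NormedField 𝕜] [NormedSpace 𝕜 E]
    [SMulCommClass ℝ 𝕜 E] [CompleteSpace E] {lam : 𝕜} (hlam : lam ≠ 0) (hT : 0 ≤ T) {φ : ℝ → E}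
    (hφ : IntervalIntegrable φ volume 0 T)
    (heq : ∀ t ∈ Set.Icc (0 : ℝ) T, gspWienerCovariance k T φ t = lam • φ t) :
    ∃ φ' φ'' : ℝ → E,
      (∀ t ∈ Set.Icc (0 : ℝ) T, HasDerivWithinAt φ (φ' t) (Set.Icc 0 T) t) ∧
      (∀ t ∈ Set.Icc (0 : ℝ) T, HasDerivWithinAt φ' (φ'' t) (Set.Icc 0 T) t) ∧
      ContinuousOn φ' (Set.Icc 0 T) ∧
      ContinuousOn φ'' (Set.Icc 0 T) ∧
      (∀ t ∈ Set.Icc (0 : ℝ) T, lam • φ'' t = -φ t) ∧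
      φ' T = 0 ∧
      lam • φ 0 = k • ∫ s in (0 : ℝ)..T, φ s ∧
      lam • φ' 0 = ∫ s in (0 : ℝ)..T, φ s := by
  have hφ_eq : ∀ t ∈ Set.Icc (0 : ℝ) T, φ t = lam⁻¹ • gspWienerCovariance k T φ t :=
    fun t ht => (eq_inv_smul_iff₀ hlam).mpr (heq t ht).symm
  have hderiv : ∀ t ∈ Set.Icc (0 : ℝ) T,
      HasDerivWithinAt φ (lam⁻¹ • ∫ s in t..T, φ s) (Set.Icc 0 T) t := fun t ht =>
    ((hasDerivWithinAt_gspWienerCovariance hφ ht).const_smul lam⁻¹).congr hφ_eq (hφ_eq t ht)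
  have hcont : ContinuousOn φ (Set.Icc 0 T) := fun t ht => (hderiv t ht).continuousWithinAt
  have hderiv2 : ∀ t ∈ Set.Icc (0 : ℝ) T,
      HasDerivWithinAt (fun u => lam⁻¹ • ∫ s in u..T, φ s) (lam⁻¹ • -φ t) (Set.Icc 0 T) t :=
    fun t ht => (hasDerivWithinAt_Icc_integral_left hcont ht).const_smul lam⁻¹
  refine ⟨fun t => lam⁻¹ • ∫ s in t..T, φ s, fun t => lam⁻¹ • -φ t, hderiv, hderiv2,
    fun t ht => (hderiv2 t ht).continuousWithinAt, hcont.neg.const_smul lam⁻¹,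
    fun t _ => smul_inv_smul₀ hlam _, ?_, ?_, smul_inv_smul₀ hlam _⟩
  · simp only [integral_same, smul_zero]
  · rw [← heq 0 (Set.left_mem_Icc.mpr hT), gspWienerCovariance_zero hT]

end GSPWiener

/-- Any continuous solution `φ` of the eigenvalue integral equation for the
kernel `min (k+t) (k+s)` on `[0,T]` is twice continuously differentiable on
`[0,T]`, with `λφ'' = -φ`, `φ'(T) = 0`, `λφ(0) = k∫₀ᵀφ` and `λφ'(0) = ∫₀ᵀφ`. -/
theorem gsp_wiener_eigenfunction_ode
    (T k lam : ℝ) (hT : 0 < T) (hk : 0 ≤ k) (hlam : 0 < lam)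
    (φ : ℝ → ℝ) (hφcont : ContinuousOn φ (Set.Icc 0 T))
    (heq : ∀ t ∈ Set.Icc (0 : ℝ) T,
      ∫ s in (0 : ℝ)..T, min (k + t) (k + s) * φ s = lam * φ t) :
    ∃ φ' φ'' : ℝ → ℝ,
      (∀ t ∈ Set.Icc (0 : ℝ) T, HasDerivWithinAt φ (φ' t) (Set.Icc 0 T) t) ∧
      (∀ t ∈ Set.Icc (0 : ℝ) T, HasDerivWithinAt φ' (φ'' t) (Set.Icc 0 T) t) ∧
      ContinuousOn φ' (Set.Icc 0 T) ∧
      ContinuousOn φ'' (Set.Icc 0 T) ∧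
      (∀ t ∈ Set.Icc (0 : ℝ) T, lam * φ'' t = -φ t) ∧
      φ' T = 0 ∧
      lam * φ 0 = k * ∫ s in (0 : ℝ)..T, φ s ∧
      lam * φ' 0 = ∫ s in (0 : ℝ)..T, φ s := by
  exact gsp_wiener_eigenfunction_ode_general hlam.ne' hT.le (hφcont.intervalIntegrable_of_Icc hT.le)
    heq
end

section
/- Let T > 0, k ≥ 0 and λ > 0 satisfy √λ · cos(T/√λ) = k · sin(T/√λ). Then the function φ(t) = √λ · sin(t/√λ) + k · cos(t/√λ) satisfies the integral equation ∫₀^T min(k+t, k+s) φ(s) ds = λ φ(t) for all t ∈ [0,T]; i.e., λ is an eigenvalue of the covariance operator with kernel min(k+t, k+s) on L²([0,T]) with eigenfunction φ. -/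
open MeasureTheory intervalIntegral

/-!
On functions `φ` with `φ a = (k + a) * φ' a` and `φ' b = 0`, the integral operator on `[a, b]` with
kernel `min (k + t) (k + s)` is a left inverse of `-d²/dt²`: split the integral at `s = t`,
integrate by parts on `[a, t]`, where the kernel is `k + s`, and integrate `φ''` on `[t, b]`, where
the kernel is the constant `k + t`. The function `√λ sin (t / √λ) + k cos (t / √λ)` satisfies
`φ'' = -φ / λ` and the boundary condition at `a = 0`; the equation relating `λ` and `T` is the
boundary condition at `b = T`.
-/

section MinKernel

variable {a b t : ℝ} {f f' f'' : ℝ → ℝ}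

theorem integral_min_mul_of_monotoneOn {u g : ℝ → ℝ} {μ : Measure ℝ}
    (hu : MonotoneOn u (Set.Icc a b)) (ht : t ∈ Set.Icc a b)
    (hleft : IntervalIntegrable (fun s => u s * g s) μ a t) (hright : IntervalIntegrable g μ t b) :
    ∫ s in a..b, min (u t) (u s) * g s ∂μ =
      (∫ s in a..t, u s * g s ∂μ) + u t * ∫ s in t..b, g s ∂μ := by
  have eqOn_left : Set.EqOn (fun s => u s * g s) (fun s => min (u t) (u s) * g s)
      (Set.uIcc a t) := by
    intro s hs
    rw [Set.uIcc_of_le ht.1] at hs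
    simp only [min_eq_right (hu ⟨hs.1, hs.2.trans ht.2⟩ ht hs.2)]
  have eqOn_right : Set.EqOn (fun s => u t * g s) (fun s => min (u t) (u s) * g s)
      (Set.uIcc t b) := by
    intro s hs
    rw [Set.uIcc_of_le ht.2] at hs
    simp only [min_eq_left (hu ht ⟨ht.1.trans hs.1, hs.2⟩ hs.1)]
  rw [← integral_add_adjacent_intervals
      (hleft.congr (eqOn_left.mono Set.uIoc_subset_uIcc))
      ((hright.const_mul (u t)).congr (eqOn_right.mono Set.uIoc_subset_uIcc)),
    ← integral_congr eqOn_left, ← integral_congr eqOn_right, intervalIntegral.integral_const_mul]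

theorem integral_const_add_mul_deriv_deriv (k : ℝ)
    (hf : ∀ s ∈ Set.uIcc a b, HasDerivAt f (f' s) s)
    (hf' : ∀ s ∈ Set.uIcc a b, HasDerivAt f' (f'' s) s) (hint : IntervalIntegrable f'' volume a b) :
    ∫ s in a..b, (k + s) * f'' s = (k + b) * f' b - (k + a) * f' a - (f b - f a) := by
  have hf'_int : IntervalIntegrable f' volume a b :=
    (HasDerivAt.continuousOn hf').intervalIntegrable
  rw [integral_mul_deriv_eq_deriv_mul (fun s _ => (hasDerivAt_id' s).const_add k) hf'
    intervalIntegrable_const hint]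
  simp only [one_mul, integral_eq_sub_of_hasDerivAt hf hf'_int]

theorem integral_min_add_mul_deriv_deriv (k : ℝ) (ht : t ∈ Set.Icc a b)
    (hf : ∀ s ∈ Set.Icc a b, HasDerivAt f (f' s) s)
    (hf' : ∀ s ∈ Set.Icc a b, HasDerivAt f' (f'' s) s) (hint : IntervalIntegrable f'' volume a b) :
    ∫ s in a..b, min (k + t) (k + s) * f'' s =
      f a - (k + a) * f' a + (k + t) * f' b - f t := by
  have hab : a ≤ b := ht.1.trans ht.2
  have left_subset : Set.uIcc a t ⊆ Set.Icc a b := by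
    rw [Set.uIcc_of_le ht.1]
    exact Set.Icc_subset_Icc_right ht.2
  have right_subset : Set.uIcc t b ⊆ Set.Icc a b := by
    rw [Set.uIcc_of_le ht.2]
    exact Set.Icc_subset_Icc_left ht.1
  have hint_left : IntervalIntegrable f'' volume a t :=
    hint.mono_set (by rwa [Set.uIcc_of_le hab])
  have hint_right : IntervalIntegrable f'' volume t b :=
    hint.mono_set (by rwa [Set.uIcc_of_le hab])
  rw [integral_min_mul_of_monotoneOn (u := fun s => k + s)
      (fun _ _ _ _ hxy => add_le_add_right hxy k) ht
      (hint_left.continuousOn_mul (by fun_prop)) hint_right,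
    integral_const_add_mul_deriv_deriv k (fun s hs => hf s (left_subset hs))
      (fun s hs => hf' s (left_subset hs)) hint_left,
    integral_eq_sub_of_hasDerivAt (fun s hs => hf' s (right_subset hs)) hint_right]
  ring

theorem integral_min_add_mul_eq_mul_of_hasDerivAt {k lam : ℝ} (hlam : lam ≠ 0)
    (ht : t ∈ Set.Icc a b)
    (hf : ∀ s ∈ Set.Icc a b, HasDerivAt f (f' s) s)
    (hf' : ∀ s ∈ Set.Icc a b, HasDerivAt f' (-f s / lam) s)
    (hleft : f a = (k + a) * f' a) (hright : f' b = 0) :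
    ∫ s in a..b, min (k + t) (k + s) * f s = lam * f t := by
  have hint : IntervalIntegrable (fun s => -f s / lam) volume a b :=
    ((HasDerivAt.continuousOn hf).neg.div_const lam).intervalIntegrable_of_Icc (ht.1.trans ht.2)
  calc
    ∫ s in a..b, min (k + t) (k + s) * f s
      = -lam * ∫ s in a..b, min (k + t) (k + s) * (-f s / lam) := by
        rw [← intervalIntegral.integral_const_mul]
        congr 1 with s
        field_simp
    _ = -lam * (f a - (k + a) * f' a + (k + t) * f' b - f t) := by
        rw [integral_min_add_mul_deriv_deriv k ht hf hf' hint]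
    _ = lam * f t := by
        rw [hleft, hright]
        ring

end MinKernel

theorem hasDerivAt_mul_sin_div_add_mul_cos_div (A B ω x : ℝ) :
    HasDerivAt (fun s => A * Real.sin (s / ω) + B * Real.cos (s / ω))
      (-(B / ω) * Real.sin (x / ω) + A / ω * Real.cos (x / ω)) x := by
  have hdiv : HasDerivAt (fun s => s / ω) (1 / ω) x := (hasDerivAt_id x).div_const ω
  exact ((hdiv.sin.const_mul A).add (hdiv.cos.const_mul B)).congr_deriv (by ring)

theorem gsp_wiener_eigenfunction_converse_general
    (T k lam : ℝ) (hlam : 0 < lam)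
    (hroot : Real.sqrt lam * Real.cos (T / Real.sqrt lam) =
      k * Real.sin (T / Real.sqrt lam)) :
    ∀ t ∈ Set.Icc (0 : ℝ) T,
      (∫ s in (0 : ℝ)..T, min (k + t) (k + s) *
        (Real.sqrt lam * Real.sin (s / Real.sqrt lam) +
          k * Real.cos (s / Real.sqrt lam))) =
      lam * (Real.sqrt lam * Real.sin (t / Real.sqrt lam) +
        k * Real.cos (t / Real.sqrt lam)) := by
  intro t ht
  have hω : Real.sqrt lam ≠ 0 := (Real.sqrt_pos.mpr hlam).ne'
  have hsq : Real.sqrt lam ^ 2 = lam := Real.sq_sqrt hlam.le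
  set ω := Real.sqrt lam
  have second_deriv_eq (s : ℝ) :
      -(ω / ω / ω) * Real.sin (s / ω) + -(k / ω) / ω * Real.cos (s / ω) =
        -(ω * Real.sin (s / ω) + k * Real.cos (s / ω)) / lam := by
    rw [← hsq]
    field_simp
    ring
  have left_boundary : ω * Real.sin (0 / ω) + k * Real.cos (0 / ω) =
      (k + 0) * (-(k / ω) * Real.sin (0 / ω) + ω / ω * Real.cos (0 / ω)) := by
    simp [hω]
  have right_boundary : -(k / ω) * Real.sin (T / ω) + ω / ω * Real.cos (T / ω) = 0 := by
    field_simp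
    linear_combination hroot
  exact integral_min_add_mul_eq_mul_of_hasDerivAt hlam.ne' ht
    (fun s _ => hasDerivAt_mul_sin_div_add_mul_cos_div ω k ω s)
    (fun s _ => (hasDerivAt_mul_sin_div_add_mul_cos_div _ _ ω s).congr_deriv (second_deriv_eq s))
    left_boundary right_boundary

/-- Conversely, if `λ > 0` satisfies `√λ·cos(T/√λ) = k·sin(T/√λ)`, then
`φ(t) = √λ·sin(t/√λ) + k·cos(t/√λ)` solves the eigenvalue integral equation
for the kernel `min (k+t) (k+s)` on `[0,T]`. -/
theorem gsp_wiener_eigenfunction_converse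
    (T k lam : ℝ) (hT : 0 < T) (hk : 0 ≤ k) (hlam : 0 < lam)
    (hroot : Real.sqrt lam * Real.cos (T / Real.sqrt lam) =
      k * Real.sin (T / Real.sqrt lam)) :
    ∀ t ∈ Set.Icc (0 : ℝ) T,
      (∫ s in (0 : ℝ)..T, min (k + t) (k + s) *
        (Real.sqrt lam * Real.sin (s / Real.sqrt lam) +
          k * Real.cos (s / Real.sqrt lam))) =
      lam * (Real.sqrt lam * Real.sin (t / Real.sqrt lam) +
        k * Real.cos (t / Real.sqrt lam)) :=
  gsp_wiener_eigenfunction_converse_general T k lam hlam hroot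
end

section
/- Let T > 0, k ≥ 0, and for ℓ ≥ 1 let λ_ℓ^{(k)} = T²/(x_ℓ^{(k)})², where x_ℓ^{(k)} is the unique solution of cot(x) = (k/T)·x in ((ℓ-1)π, ℓπ). Define c_ℓ^{(k)} = λ_ℓ^{(k)} · ((2ℓ-1)π/(2T))². Then c_ℓ^{(k)} ≥ 1 for all ℓ ≥ 1; c_ℓ^{(k)} < ((2ℓ-1)/(2ℓ-2))² for all ℓ ≥ 2; and if k = 0 then c_ℓ^{(0)} = 1 for all ℓ ≥ 1 (so that λ_ℓ^{(0)} = 4T²/((2ℓ-1)²π²) are the classical eigenvalues of the Wiener process on [0,T]). -/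
/-!
The classical frequency `a = (2ℓ - 1)π/2` is a zero of the cosine and the midpoint of
`((ℓ - 1)π, ℓπ)`. On that interval `cot x = tan (a - x)` is strictly decreasing and vanishes at
`a`, so `cot (x ℓ) = (k / T) * x ℓ ≥ 0` forces `x ℓ ≤ a`, with equality when `k = 0`. Since `c ℓ`
equals `(a / x ℓ) ^ 2`, the lower bound and the classical case follow, and the upper bound comes
from `(ℓ - 1)π < x ℓ`.
-/

open Real Set

section CotangentSign

variable {a x : ℝ}

lemma cot_eq_tan_sub_of_cos_eq_zero (ha : cos a = 0) (x : ℝ) : cot x = tan (a - x) := by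
  have hsin : sin a ≠ 0 := fun h => by simpa [ha, h] using sin_sq_add_cos_sq a
  rw [cot_eq_cos_div_sin, tan_eq_sin_div_cos, sin_sub, cos_sub, ha, zero_mul, zero_mul, sub_zero,
    zero_add, mul_div_mul_left _ _ hsin]

lemma strictAntiOn_cot_of_cos_eq_zero (ha : cos a = 0) :
    StrictAntiOn cot (Ioo (a - π / 2) (a + π / 2)) := fun x hx y hy hxy => by
  rw [cot_eq_tan_sub_of_cos_eq_zero ha x, cot_eq_tan_sub_of_cos_eq_zero ha y]
  exact strictMonoOn_tan ⟨by linarith [hy.2], by linarith [hy.1]⟩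
    ⟨by linarith [hx.2], by linarith [hx.1]⟩ (sub_lt_sub_left hxy a)

lemma cot_eq_zero_of_cos_eq_zero (ha : cos a = 0) : cot a = 0 := by
  rw [cot_eq_cos_div_sin, ha, zero_div]

lemma cot_nonneg_iff_le_of_cos_eq_zero (ha : cos a = 0) (hx : x ∈ Ioo (a - π / 2) (a + π / 2)) :
    0 ≤ cot x ↔ x ≤ a := by
  have ha_mem : a ∈ Ioo (a - π / 2) (a + π / 2) :=
    ⟨sub_lt_self a pi_div_two_pos, lt_add_of_pos_right a pi_div_two_pos⟩
  rw [← cot_eq_zero_of_cos_eq_zero ha, (strictAntiOn_cot_of_cos_eq_zero ha).le_iff_ge ha_mem hx]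

lemma cot_eq_zero_iff_eq_of_cos_eq_zero (ha : cos a = 0) (hx : x ∈ Ioo (a - π / 2) (a + π / 2)) :
    cot x = 0 ↔ x = a := by
  have ha_mem : a ∈ Ioo (a - π / 2) (a + π / 2) :=
    ⟨sub_lt_self a pi_div_two_pos, lt_add_of_pos_right a pi_div_two_pos⟩
  rw [← cot_eq_zero_of_cos_eq_zero ha, (strictAntiOn_cot_of_cos_eq_zero ha).injOn.eq_iff hx ha_mem]

end CotangentSign

/-- The `ℓ`-th classical frequency `(2ℓ - 1)π/2`, which is the root of `cot` in `((ℓ - 1)π, ℓπ)`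
and determines the eigenvalues of the Wiener process (the case `k = 0`). -/
noncomputable def wienerFrequency (ℓ : ℕ) : ℝ := (2 * ℓ - 1) * π / 2

namespace wienerFrequency

variable {ℓ : ℕ} {x : ℝ}

lemma pos (hℓ : 1 ≤ ℓ) : 0 < wienerFrequency ℓ := by
  have hℓ' : (1 : ℝ) ≤ ℓ := mod_cast hℓ
  have hodd : (0 : ℝ) < 2 * ℓ - 1 := by linarith
  rw [wienerFrequency]
  positivity

lemma cos_eq_zero (ℓ : ℕ) : cos (wienerFrequency ℓ) = 0 :=
  cos_eq_zero_iff.2 ⟨ℓ - 1, by rw [wienerFrequency]; push_cast; ring⟩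

lemma Ioo_sub_add_pi_div_two (ℓ : ℕ) :
    Ioo (wienerFrequency ℓ - π / 2) (wienerFrequency ℓ + π / 2) = Ioo ((ℓ - 1) * π) (ℓ * π) := by
  rw [wienerFrequency]
  congr 1 <;> ring

lemma cot_nonneg_iff_le (hx : x ∈ Ioo ((ℓ - 1) * π) (ℓ * π)) :
    0 ≤ cot x ↔ x ≤ wienerFrequency ℓ :=
  cot_nonneg_iff_le_of_cos_eq_zero (cos_eq_zero ℓ) (by rwa [Ioo_sub_add_pi_div_two])

lemma cot_eq_zero_iff_eq (hx : x ∈ Ioo ((ℓ - 1) * π) (ℓ * π)) :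
    cot x = 0 ↔ x = wienerFrequency ℓ :=
  cot_eq_zero_iff_eq_of_cos_eq_zero (cos_eq_zero ℓ) (by rwa [Ioo_sub_add_pi_div_two])

lemma div_lt (hℓ : 2 ≤ ℓ) (hx : (ℓ - 1) * π < x) :
    wienerFrequency ℓ / x < (2 * ℓ - 1) / (2 * ℓ - 2) := by
  have hℓ' : (2 : ℝ) ≤ ℓ := mod_cast hℓ
  have hpred : (0 : ℝ) < ℓ - 1 := by linarith
  calc wienerFrequency ℓ / x
      < wienerFrequency ℓ / ((ℓ - 1) * π) :=
        div_lt_div_of_pos_left (pos (one_le_two.trans hℓ)) (by positivity) hx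
    _ = (2 * ℓ - 1) / (2 * ℓ - 2) := by
      rw [wienerFrequency, ← mul_sub_one (2 : ℝ)]
      field_simp

lemma sq_div_sq_mul_sq {T : ℝ} (hT : T ≠ 0) (ℓ : ℕ) (x : ℝ) :
    T ^ 2 / x ^ 2 * ((2 * ℓ - 1) * π / (2 * T)) ^ 2 = (wienerFrequency ℓ / x) ^ 2 := by
  rw [wienerFrequency]
  field_simp

lemma sq_div_sq (T : ℝ) (ℓ : ℕ) :
    T ^ 2 / wienerFrequency ℓ ^ 2 = 4 * T ^ 2 / ((2 * ℓ - 1) ^ 2 * π ^ 2) := by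
  rw [wienerFrequency, div_pow, mul_pow, div_div_eq_mul_div]
  ring

end wienerFrequency

/-- Bounds for the normalized eigenvalues `c ℓ = λ ℓ · ((2ℓ-1)π/(2T))²` of the
GSP-Wiener process: `c ℓ ≥ 1`, `c ℓ < ((2ℓ-1)/(2ℓ-2))²` for `ℓ ≥ 2`, and
`c ℓ = 1` for all `ℓ` when `k = 0` (classical Wiener eigenvalues). -/
theorem gsp_wiener_normalized_eigenvalue_bounds
    (T k : ℝ) (hT : 0 < T) (hk : 0 ≤ k) (x lam c : ℕ → ℝ)
    (hx : ∀ ℓ : ℕ, 1 ≤ ℓ →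
      x ℓ ∈ Set.Ioo (((ℓ : ℝ) - 1) * Real.pi) ((ℓ : ℝ) * Real.pi) ∧
        Real.cot (x ℓ) = (k / T) * x ℓ)
    (hlam : ∀ ℓ : ℕ, 1 ≤ ℓ → lam ℓ = T ^ 2 / (x ℓ) ^ 2)
    (hc : ∀ ℓ : ℕ, 1 ≤ ℓ →
      c ℓ = lam ℓ * ((2 * (ℓ : ℝ) - 1) * Real.pi / (2 * T)) ^ 2) :
    (∀ ℓ : ℕ, 1 ≤ ℓ → 1 ≤ c ℓ) ∧
    (∀ ℓ : ℕ, 2 ≤ ℓ →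
      c ℓ < ((2 * (ℓ : ℝ) - 1) / (2 * (ℓ : ℝ) - 2)) ^ 2) ∧
    (k = 0 → ∀ ℓ : ℕ, 1 ≤ ℓ → c ℓ = 1 ∧
      lam ℓ = 4 * T ^ 2 / ((2 * (ℓ : ℝ) - 1) ^ 2 * Real.pi ^ 2)) := by
  have hpos : ∀ ℓ : ℕ, 1 ≤ ℓ → 0 < x ℓ := fun ℓ hℓ =>
    (mul_nonneg (sub_nonneg.2 (mod_cast hℓ)) pi_pos.le).trans_lt (hx ℓ hℓ).1.1
  have hc_sq : ∀ ℓ : ℕ, 1 ≤ ℓ → c ℓ = (wienerFrequency ℓ / x ℓ) ^ 2 := fun ℓ hℓ => by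
    rw [hc ℓ hℓ, hlam ℓ hℓ, wienerFrequency.sq_div_sq_mul_sq hT.ne']
  refine ⟨fun ℓ hℓ => ?_, fun ℓ hℓ => ?_, fun hk_zero ℓ hℓ => ?_⟩
  · obtain ⟨hmem, hcot⟩ := hx ℓ hℓ
    have hx_pos := hpos ℓ hℓ
    have hle : x ℓ ≤ wienerFrequency ℓ :=
      (wienerFrequency.cot_nonneg_iff_le hmem).1 (by rw [hcot]; positivity)
    rw [hc_sq ℓ hℓ]
    exact one_le_pow₀ ((one_le_div hx_pos).2 hle)
  · have hℓ_pos : 1 ≤ ℓ := one_le_two.trans hℓ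
    rw [hc_sq ℓ hℓ_pos]
    exact pow_lt_pow_left₀ (wienerFrequency.div_lt hℓ (hx ℓ hℓ_pos).1.1)
      (div_pos (wienerFrequency.pos hℓ_pos) (hpos ℓ hℓ_pos)).le two_ne_zero
  · obtain ⟨hmem, hcot⟩ := hx ℓ hℓ
    have heq : x ℓ = wienerFrequency ℓ :=
      (wienerFrequency.cot_eq_zero_iff_eq hmem).1 (by rw [hcot, hk_zero, zero_div, zero_mul])
    constructor
    · rw [hc_sq ℓ hℓ, ← heq, div_self (hpos ℓ hℓ).ne', one_pow]
    · rw [hlam ℓ hℓ, heq, wienerFrequency.sq_div_sq]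
end

section
/- Let T > 0, k ≥ 0, and for ℓ ≥ 1 let λ_ℓ^{(k)} = T²/(x_ℓ^{(k)})², where x_ℓ^{(k)} is the unique solution of cot(x) = (k/T)·x in ((ℓ-1)π, ℓπ). Then the normalized sequence c_ℓ^{(k)} = λ_ℓ^{(k)} · ((2ℓ-1)π/(2T))² converges to 1 as ℓ → ∞; equivalently, ℓ²π²·λ_ℓ^{(k)} → T² as ℓ → ∞. -/
open Filter

/-!
A bounded error is negligible against a sequence tending to infinity, so the solutions `x ℓ`,
confined to `((ℓ-1)π, ℓπ)`, and the midpoints `m ℓ = (2ℓ-1)π/2` of these intervals are both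
asymptotically equivalent to `ℓπ`. The two sequences in question are `(m ℓ / x ℓ)²` and
`T² (ℓπ / x ℓ)²`, and the ratios tend to `1`.
-/

open Asymptotics Topology

theorem isEquivalent_of_sub_isBigO_one {α E : Type*} [NormedAddCommGroup E] {l : Filter α}
    {u v : α → E} (huv : (u - v) =O[l] (1 : α → ℝ)) (hv : Tendsto (fun a => ‖v a‖) l atTop) :
    u ~[l] v :=
  huv.trans_isLittleO ((isLittleO_one_left_iff ℝ).2 hv)

theorem tendsto_div_pow_mul_pow_of_isEquivalent {α 𝕜 : Type*} [NormedField 𝕜] {l : Filter α}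
    {u v : α → 𝕜} (huv : u ~[l] v) (hv : ∀ᶠ a in l, v a ≠ 0) (c : 𝕜) (n : ℕ) :
    Tendsto (fun a => c / v a ^ n * u a ^ n) l (𝓝 c) := by
  have hratio : Tendsto (u / v) l (𝓝 1) := (isEquivalent_iff_tendsto_one hv).1 huv
  have hpow : Tendsto (fun a => c * (u / v) a ^ n) l (𝓝 c) := by
    simpa using (hratio.pow n).const_mul c
  refine hpow.congr fun a => ?_
  rw [Pi.div_apply, div_pow, mul_div_assoc', div_mul_eq_mul_div]

theorem isEquivalent_natCast_mul_of_mem_Icc {c : ℝ} {x : ℕ → ℝ} (hc : 0 < c)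
    (hx : ∀ᶠ n : ℕ in atTop, x n ∈ Set.Icc (((n : ℝ) - 1) * c) (n * c)) :
    x ~[atTop] fun n : ℕ => (n : ℝ) * c := by
  refine isEquivalent_of_sub_isBigO_one (.of_bound c ?_)
    (tendsto_norm_atTop_atTop.comp (tendsto_natCast_atTop_atTop.atTop_mul_const hc))
  filter_upwards [hx] with n ⟨hlower, hupper⟩
  rw [Pi.sub_apply, Pi.one_apply, norm_one, mul_one, Real.norm_eq_abs, abs_le]
  constructor <;> linarith

theorem gsp_wiener_normalized_eigenvalues_tendsto_one_general
    {T : ℝ} (hT : T ≠ 0) {x lam : ℕ → ℝ}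
    (hx : x ~[atTop] fun ℓ : ℕ => (ℓ : ℝ) * Real.pi)
    (hlam : ∀ᶠ ℓ in atTop, lam ℓ = T ^ 2 / x ℓ ^ 2) :
    Tendsto (fun ℓ : ℕ => lam ℓ * ((2 * (ℓ : ℝ) - 1) * Real.pi / (2 * T)) ^ 2)
      atTop (𝓝 1) ∧
    Tendsto (fun ℓ : ℕ => (ℓ : ℝ) ^ 2 * Real.pi ^ 2 * lam ℓ) atTop (𝓝 (T ^ 2)) := by
  have hx_atTop : Tendsto x atTop atTop :=
    hx.symm.tendsto_atTop (tendsto_natCast_atTop_atTop.atTop_mul_const Real.pi_pos)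
  have hx_ne : ∀ᶠ ℓ in atTop, x ℓ ≠ 0 := hx_atTop.eventually_ne_atTop 0
  have hmid : (fun ℓ : ℕ => (2 * (ℓ : ℝ) - 1) * Real.pi / 2) ~[atTop]
      fun ℓ : ℕ => (ℓ : ℝ) * Real.pi :=
    isEquivalent_natCast_mul_of_mem_Icc Real.pi_pos <| .of_forall fun ℓ => by
      constructor <;> linarith [Real.pi_pos]
  constructor
  · refine (tendsto_div_pow_mul_pow_of_isEquivalent (hmid.trans hx.symm) hx_ne 1 2).congr' ?_
    filter_upwards [hlam] with ℓ hℓ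
    rw [hℓ]
    field_simp
  · refine (tendsto_div_pow_mul_pow_of_isEquivalent hx.symm hx_ne (T ^ 2) 2).congr' ?_
    filter_upwards [hlam] with ℓ hℓ
    rw [hℓ]
    ring

/-- The normalized eigenvalue sequence `c ℓ = λ ℓ · ((2ℓ-1)π/(2T))²` of the
GSP-Wiener process converges to `1`; equivalently `ℓ²π²·λ ℓ → T²`. -/
theorem gsp_wiener_normalized_eigenvalues_tendsto_one
    (T k : ℝ) (hT : 0 < T) (hk : 0 ≤ k) (x lam : ℕ → ℝ)
    (hx : ∀ ℓ : ℕ, 1 ≤ ℓ →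
      x ℓ ∈ Set.Ioo (((ℓ : ℝ) - 1) * Real.pi) ((ℓ : ℝ) * Real.pi) ∧
        Real.cot (x ℓ) = (k / T) * x ℓ)
    (hlam : ∀ ℓ : ℕ, 1 ≤ ℓ → lam ℓ = T ^ 2 / (x ℓ) ^ 2) :
    Tendsto (fun ℓ : ℕ =>
        lam ℓ * ((2 * (ℓ : ℝ) - 1) * Real.pi / (2 * T)) ^ 2)
      atTop (nhds 1) ∧
    Tendsto (fun ℓ : ℕ => (ℓ : ℝ) ^ 2 * Real.pi ^ 2 * lam ℓ)
      atTop (nhds (T ^ 2)) :=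
  gsp_wiener_normalized_eigenvalues_tendsto_one_general hT.ne'
    (isEquivalent_natCast_mul_of_mem_Icc Real.pi_pos <|
      (eventually_ge_atTop 1).mono fun ℓ hℓ => Set.Ioo_subset_Icc_self (hx ℓ hℓ).1)
    ((eventually_ge_atTop 1).mono hlam)
end

section
/- Let T > 0 and k > 0, and for ℓ ≥ 1 let x_ℓ^{(k)} be the unique solution of cot(x) = (k/T)·x in ((ℓ-1)π, ℓπ). Then x_ℓ^{(k)} − (ℓ-1)π → 0 as ℓ → ∞. -/
open Filter

/-!
The left endpoints `(ℓ-1)π` tend to infinity, so `cot (x ℓ) = (k/T)·x ℓ` does too. By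
`π`-periodicity the offset `y = x ℓ - (ℓ-1)π ∈ (0, π)` has the same cotangent, and once this is
positive, `y < tan y = 1 / cot y` squeezes `y` to zero.
-/

theorem cot_sub_int_mul_pi (x : ℝ) (m : ℤ) : Real.cot (x - m * Real.pi) = Real.cot x := by
  rw [← Real.tan_inv_eq_cot, ← Real.tan_inv_eq_cot, Real.tan_sub_int_mul_pi]

theorem lt_inv_cot {y : ℝ} (hy : y ∈ Set.Ioo 0 Real.pi) (hcot : 0 < Real.cot y) :
    y < (Real.cot y)⁻¹ := by
  have hsin : 0 < Real.sin y := Real.sin_pos_of_mem_Ioo hy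
  have hcos : 0 < Real.cos y := by
    rwa [Real.cot_eq_cos_div_sin, div_pos_iff_of_pos_right hsin] at hcot
  have hlt : y < Real.pi / 2 := by
    by_contra! hge
    exact hcos.not_ge
      (Real.cos_nonpos_of_pi_div_two_le_of_le hge (by linarith [hy.2, Real.pi_pos]))
  simpa only [Real.cot_inv_eq_tan] using Real.lt_tan hy.1 hlt

theorem tendsto_zero_of_tendsto_cot_atTop {α : Type*} {l : Filter α} {y : α → ℝ}
    (hy : ∀ᶠ a in l, y a ∈ Set.Ioo 0 Real.pi)
    (hcot : Tendsto (fun a => Real.cot (y a)) l atTop) :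
    Tendsto y l (nhds 0) := by
  refine tendsto_of_tendsto_of_tendsto_of_le_of_le' tendsto_const_nhds
    hcot.inv_tendsto_atTop (hy.mono fun a ha => ha.1.le) ?_
  filter_upwards [hy, hcot.eventually_gt_atTop 0] with a ha hpos
  exact (lt_inv_cot ha hpos).le

theorem tendsto_sub_int_mul_pi_of_tendsto_cot_atTop {α : Type*} {l : Filter α} {x : α → ℝ}
    {m : α → ℤ} (hx : ∀ᶠ a in l, x a ∈ Set.Ioo (m a * Real.pi) ((m a + 1) * Real.pi))
    (hcot : Tendsto (fun a => Real.cot (x a)) l atTop) :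
    Tendsto (fun a => x a - m a * Real.pi) l (nhds 0) := by
  refine tendsto_zero_of_tendsto_cot_atTop ?_ (by simpa only [cot_sub_int_mul_pi] using hcot)
  filter_upwards [hx] with a ha
  exact ⟨by linarith [ha.1], by linarith [ha.2]⟩

/-- For `k > 0`, the unique root `x ℓ` of `cot x = (k/T)·x` in `((ℓ-1)π, ℓπ)`
satisfies `x ℓ - (ℓ-1)π → 0` as `ℓ → ∞`. -/
theorem gsp_wiener_cot_root_asymptotics
    (T k : ℝ) (hT : 0 < T) (hk : 0 < k) (x : ℕ → ℝ)
    (hx : ∀ ℓ : ℕ, 1 ≤ ℓ →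
      x ℓ ∈ Set.Ioo (((ℓ : ℝ) - 1) * Real.pi) ((ℓ : ℝ) * Real.pi) ∧
        Real.cot (x ℓ) = (k / T) * x ℓ) :
    Tendsto (fun ℓ : ℕ => x ℓ - ((ℓ : ℝ) - 1) * Real.pi) atTop (nhds 0) := by
  have hroot := (eventually_ge_atTop 1).mono hx
  have hleft : Tendsto (fun ℓ : ℕ => ((ℓ : ℝ) - 1) * Real.pi) atTop atTop :=
    (tendsto_atTop_add_const_right _ (-1) tendsto_natCast_atTop_atTop).atTop_mul_const
      Real.pi_pos
  have hx_top : Tendsto x atTop atTop :=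
    tendsto_atTop_mono' _ (hroot.mono fun ℓ h => h.1.1.le) hleft
  have hcot_top : Tendsto (fun ℓ => Real.cot (x ℓ)) atTop atTop :=
    (hx_top.const_mul_atTop (div_pos hk hT)).congr' (hroot.mono fun ℓ h => h.2.symm)
  have hmem : ∀ᶠ ℓ : ℕ in atTop, x ℓ ∈
      Set.Ioo (((ℓ - 1 : ℤ) : ℝ) * Real.pi) ((((ℓ - 1 : ℤ) : ℝ) + 1) * Real.pi) :=
    hroot.mono fun ℓ h => by simpa using h.1
  simpa using tendsto_sub_int_mul_pi_of_tendsto_cot_atTop hmem hcot_top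
end

section
/- Let T > 0 and k ≥ 0, and let Z be a GSP-Wiener process on [0,T], i.e. a centered Gaussian process with covariance K(t,s) = min(k+t, k+s), with almost surely continuous paths, viewed as a random variable with values in L²([0,T]). Then the quadratic quantization error satisfies e_n(Z) = Θ((ln n)^{-1/2}): there exist constants 0 < C₁ ≤ C₂ and N ∈ ℕ such that for all n ≥ N, C₁·(ln n)^{-1/2} ≤ e_n(Z) ≤ C₂·(ln n)^{-1/2}. -/
open MeasureTheory ProbabilityTheory Filter

/-- The `n`-th quadratic quantization error of an `H`-valued random variable:
the infimum over all codebooks `α ⊆ H` with `|α| ≤ n` of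
`(E min_{a∈α} ‖X - a‖²)^{1/2}`. -/
noncomputable def quantErr {Ω : Type*} [MeasurableSpace Ω] (P : Measure Ω)
    {H : Type*} [NormedAddCommGroup H] (X : Ω → H) (n : ℕ) : ℝ :=
  sInf { r : ℝ | ∃ α : Finset H, ∃ hα : α.Nonempty, α.card ≤ n ∧
    r = Real.sqrt (∫ ω, α.inf' hα (fun a => ‖X ω - a‖ ^ 2) ∂P) }

/-!
For the lower bound, let `d ≍ log n` and slice `[0, T]` into grids `s + i h` of mesh `h ≍ T / d`.
The `d` increments of `Z` along a grid are independent with variance `h`, so by Chernoff's bound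
`Z` stays within squared distance `d h / 32` of a given function on the grid with probability at
most `exp (-d / 4)`. A union bound over the `n` codewords and an average over the offset `s` bound
the distortion below by a multiple of `T ^ 2 / d`.

For the upper bound, take as codewords the step functions of mesh `h = T / d` whose increments are
`√h` times an integer vector of `ℓ¹`-norm `O(d)`; there are only `exp (O(d))` of them. Rounding a
path at the grid points costs `O(h)` pointwise as long as its increments, divided by `√h`, have
`ℓ¹`-norm `O(d)`. On the complementary event the zero codeword is used, and its cost is controlled
by an exponential moment of the sum of the absolute increments.
-/

open scoped ENNReal

/-! ### Distortion of a codebook -/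

lemma enorm_sq_eq_ofReal_sq (x : ℝ) : ‖x‖ₑ ^ 2 = ENNReal.ofReal (x ^ 2) := by
  rw [Real.enorm_eq_ofReal_abs, ← ENNReal.ofReal_pow (abs_nonneg x), sq_abs]

lemma eLpNorm_two_sq {S E : Type*} [MeasurableSpace S] {μ : Measure S} [NormedAddCommGroup E]
    (f : S → E) : eLpNorm f 2 μ ^ 2 = ∫⁻ x, ‖f x‖ₑ ^ 2 ∂μ := by
  simpa using eLpNorm_nnreal_pow_eq_lintegral (f := f) (μ := μ) (p := 2) two_ne_zero

lemma enorm_sub_sq_eq_lintegral {S E : Type*} [MeasurableSpace S] {μ : Measure S}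
    [NormedAddCommGroup E] (f g : Lp E 2 μ) {u v : S → E} (hu : f =ᵐ[μ] u) (hv : g =ᵐ[μ] v) :
    ‖f - g‖ₑ ^ 2 = ∫⁻ x, ‖u x - v x‖ₑ ^ 2 ∂μ := by
  rw [Lp.enorm_def, eLpNorm_congr_ae ((Lp.coeFn_sub f g).trans (hu.sub hv))]
  exact eLpNorm_two_sq (u - v)

section Distortion

variable {Ω H : Type*} [MeasurableSpace Ω] {P : Measure Ω} [NormedAddCommGroup H] {X : Ω → H}

/-- The distortion `E min_{a ∈ α} ‖X - a‖²` of the codebook `α`, valued in `[0, ∞]` so that bounds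
on it need no integrability. -/
noncomputable def distortion (P : Measure Ω) (X : Ω → H) (α : Finset H) : ℝ≥0∞ :=
  ∫⁻ ω, ⨅ a ∈ α, ‖X ω - a‖ₑ ^ 2 ∂P

lemma ofReal_inf'_norm_sub_sq {α : Finset H} (hα : α.Nonempty) (x : H) :
    ENNReal.ofReal (α.inf' hα fun a => ‖x - a‖ ^ 2) = ⨅ a ∈ α, ‖x - a‖ₑ ^ 2 := by
  have hmin : ∀ y z : ℝ, ENNReal.ofReal (y ⊓ z) = ENNReal.ofReal y ⊓ ENNReal.ofReal z :=
    fun _ _ => ENNReal.ofReal_mono.map_min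
  rw [Finset.apply_inf'_eq_inf'_comp hα ENNReal.ofReal hmin, Finset.inf'_eq_inf, Finset.inf_eq_iInf]
  simp only [Function.comp_apply, ENNReal.ofReal_pow (norm_nonneg _), ofReal_norm]

lemma integral_inf'_norm_sub_sq (hX : AEStronglyMeasurable X P) {α : Finset H} (hα : α.Nonempty) :
    ∫ ω, α.inf' hα (fun a => ‖X ω - a‖ ^ 2) ∂P = (distortion P X α).toReal := by
  have hmeas : AEStronglyMeasurable (fun ω => α.inf' hα fun a => ‖X ω - a‖ ^ 2) P := by
    convert Finset.inf'_induction hα (p := (AEStronglyMeasurable · P)) (fun a ω => ‖X ω - a‖ ^ 2)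
      (fun _ hf _ hg => hf.inf hg) fun a _ => (hX.sub aestronglyMeasurable_const).norm.pow 2
    simp only [Finset.inf'_apply]
  have hnonneg : ∀ ω, 0 ≤ α.inf' hα fun a => ‖X ω - a‖ ^ 2 :=
    fun ω => (Finset.le_inf'_iff hα _).2 fun _ _ => by positivity
  rw [integral_eq_lintegral_of_nonneg_ae (.of_forall hnonneg) hmeas, distortion]
  simp only [ofReal_inf'_norm_sub_sq hα]

lemma quantErr_le_sqrt (hX : AEStronglyMeasurable X P) {α : Finset H} (hα : α.Nonempty) {n : ℕ}
    (hcard : α.card ≤ n) {c : ℝ} (hc : 0 ≤ c) (h : distortion P X α ≤ ENNReal.ofReal c) :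
    quantErr P X n ≤ √c := by
  have hbdd : BddBelow {r : ℝ | ∃ α : Finset H, ∃ hα : α.Nonempty, α.card ≤ n ∧
      r = √(∫ ω, α.inf' hα (fun a => ‖X ω - a‖ ^ 2) ∂P)} :=
    ⟨0, by rintro r ⟨_, _, _, rfl⟩; exact Real.sqrt_nonneg _⟩
  refine (csInf_le hbdd ⟨α, hα, hcard, rfl⟩).trans (Real.sqrt_le_sqrt ?_)
  rw [integral_inf'_norm_sub_sq hX hα]
  exact ENNReal.toReal_le_of_le_ofReal hc h

lemma distortion_ne_top [IsFiniteMeasure P] (hX : MemLp X 2 P) {α : Finset H} (hα : α.Nonempty) :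
    distortion P X α ≠ ∞ := by
  obtain ⟨a, ha⟩ := hα
  have hsub : eLpNorm (fun ω => X ω - a) 2 P < ∞ := (hX.sub (memLp_const a)).eLpNorm_lt_top
  have hfin : ∫⁻ ω, ‖X ω - a‖ₑ ^ 2 ∂P ≠ ∞ := by
    rw [← eLpNorm_two_sq]
    exact ENNReal.pow_ne_top hsub.ne
  exact ((lintegral_mono fun ω => iInf₂_le a ha).trans_lt hfin.lt_top).ne

lemma sqrt_le_quantErr [IsFiniteMeasure P] (hX : MemLp X 2 P) {n : ℕ} (hn : 1 ≤ n) {c : ℝ}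
    (h : ∀ α : Finset H, α.Nonempty → α.card ≤ n → ENNReal.ofReal c ≤ distortion P X α) :
    √c ≤ quantErr P X n := by
  refine le_csInf ⟨_, {0}, Finset.singleton_nonempty 0, by simpa using hn, rfl⟩ ?_
  rintro _ ⟨α, hα, hcard, rfl⟩
  rw [integral_inf'_norm_sub_sq hX.1 hα]
  exact Real.sqrt_le_sqrt <|
    (ENNReal.ofReal_le_iff_le_toReal (distortion_ne_top hX hα)).1 (h α hα hcard)

lemma mul_one_sub_card_mul_le_lintegral_iInf {A : Type*} [IsProbabilityMeasure P] (s : Finset A)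
    {f : A → Ω → ℝ≥0∞} (hf : ∀ a ∈ s, AEMeasurable (f a) P) {r p : ℝ≥0∞}
    (hp : ∀ a ∈ s, P {ω | f a ω < r} ≤ p) :
    r * (1 - s.card * p) ≤ ∫⁻ ω, ⨅ a ∈ s, f a ω ∂P := by
  have hmeas : AEMeasurable (fun ω => ⨅ a ∈ s, f a ω) P := .biInf _ s.countable_toSet hf
  have hcompl : {ω | r ≤ ⨅ a ∈ s, f a ω}ᶜ = ⋃ a ∈ s, {ω | f a ω < r} := by
    ext ω; simp
  refine le_trans ?_ (mul_meas_ge_le_lintegral₀ hmeas r)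
  gcongr
  rw [tsub_le_iff_right]
  calc (1 : ℝ≥0∞) = P Set.univ := measure_univ.symm
    _ ≤ P {ω | r ≤ ⨅ a ∈ s, f a ω} + P {ω | r ≤ ⨅ a ∈ s, f a ω}ᶜ := by
      rw [← Set.union_compl_self {ω | r ≤ ⨅ a ∈ s, f a ω}]; exact measure_union_le _ _
    _ ≤ P {ω | r ≤ ⨅ a ∈ s, f a ω} + s.card * p := by
      rw [hcompl, ← nsmul_eq_mul]
      gcongr
      exact (measure_biUnion_finset_le _ _).trans (Finset.sum_le_card_nsmul _ _ _ hp)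

end Distortion

/-! ### GSP-Wiener processes -/

lemma exists_measurable_uncurry_of_ae_continuous {Ω ι E : Type*} [MeasurableSpace Ω]
    {P : Measure Ω} [TopologicalSpace ι] [TopologicalSpace.MetrizableSpace ι]
    [SecondCountableTopology ι] [MeasurableSpace ι] [OpensMeasurableSpace ι] [Nonempty ι]
    [TopologicalSpace E] [TopologicalSpace.PseudoMetrizableSpace E] [MeasurableSpace E]
    [BorelSpace E] [Nonempty E] {Z : ι → Ω → E} (hmeas : ∀ t, AEMeasurable (Z t) P)
    (hcont : ∀ᵐ ω ∂P, Continuous fun t => Z t ω) :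
    ∃ Z' : ι → Ω → E, Measurable (Function.uncurry Z') ∧ ∀ᵐ ω ∂P, ∀ t, Z' t ω = Z t ω := by
  classical
  let q : ℕ → ι := TopologicalSpace.denseSeq ι
  have hgood : ∀ᵐ ω ∂P, (Continuous fun t => Z t ω) ∧
      ∀ n, Z (q n) ω = (hmeas (q n)).mk (Z (q n)) ω :=
    hcont.and (ae_all_iff.2 fun n => (hmeas (q n)).ae_eq_mk)
  obtain ⟨N, hN, hNmeas, hN0⟩ := exists_measurable_superset_of_null (ae_iff.1 hgood)
  replace hN : ∀ ω ∉ N, _ := fun ω hω => not_not.1 fun h => hω (hN h)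
  let c : E := Classical.arbitrary E
  let Z' : ι → Ω → E := fun t ω => if ω ∈ N then c else Z t ω
  have hcont' : ∀ ω, Continuous fun t => Z' t ω := fun ω => by
    by_cases hω : ω ∈ N
    · simpa only [Z', if_pos hω] using continuous_const
    · simpa only [Z', if_neg hω] using (hN ω hω).1
  have hmeas_dense : ∀ n, Measurable (Z' (q n)) := fun n => by
    have heq : Z' (q n) = N.piecewise (fun _ => c) ((hmeas (q n)).mk (Z (q n))) := by
      ext ω
      by_cases hω : ω ∈ N
      · simp only [Z', if_pos hω, Set.piecewise_eq_of_mem _ _ _ hω]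
      · simp only [Z', if_neg hω, Set.piecewise_eq_of_notMem _ _ _ hω, (hN ω hω).2 n]
    rw [heq]
    exact measurable_const.piecewise hNmeas (hmeas (q n)).measurable_mk
  have hmeas' : ∀ t, Measurable (Z' t) := fun t => by
    obtain ⟨u, hu, hlim⟩ := mem_closure_iff_seq_limit.1 (TopologicalSpace.denseRange_denseSeq ι t)
    refine measurable_of_tendsto_metrizable (f := fun n => Z' (u n)) (fun n => ?_)
      (tendsto_pi_nhds.2 fun ω => ((hcont' ω).tendsto t).comp hlim)
    obtain ⟨m, hm⟩ := hu n
    exact hm ▸ hmeas_dense m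
  refine ⟨Z', measurable_uncurry_of_continuous_of_measurable hcont' hmeas', ?_⟩
  filter_upwards [measure_eq_zero_iff_ae_notMem.1 hN0] with ω hω t using if_neg hω

lemma isGaussianProcess_of_map_sum_eq_gaussianReal {Ω ι : Type*} [MeasurableSpace Ω]
    {P : Measure Ω} {Y : ι → Ω → ℝ}
    (h : ∀ (m : ℕ) (t : Fin m → ι) (c : Fin m → ℝ), ∃ μ v,
      P.map (fun ω => ∑ i, c i * Y (t i) ω) = gaussianReal μ v) :
    IsGaussianProcess Y P := by
  classical
  have hmeas : ∀ t, AEMeasurable (Y t) P := fun t => by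
    obtain ⟨μ, v, hμv⟩ := h 1 (fun _ => t) fun _ => 1
    simp only [Finset.univ_unique, one_mul, Finset.sum_singleton] at hμv
    exact aemeasurable_of_map_neZero (hμv ▸ inferInstance)
  refine ⟨fun I => ⟨isGaussian_of_map_eq_gaussianReal fun L => ?_⟩⟩
  let e := (Fintype.equivFin I).symm
  obtain ⟨μ, v, hμv⟩ := h _ (fun i => (e i : ι)) fun i => L (Pi.single (e i) 1)
  refine ⟨μ, v, ?_⟩
  have hmeas' : AEMeasurable (fun ω => I.restrict fun i => Y i ω) P :=
    aemeasurable_pi_lambda _ fun i => hmeas i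
  rw [← hμv, AEMeasurable.map_map_of_aemeasurable (by fun_prop) hmeas']
  congr 1 with ω
  rw [Function.comp_apply, e.sum_comp fun i => L (Pi.single i 1) * Y i ω]
  conv_lhs => rw [← Finset.univ_sum_single (I.restrict fun i => Y i ω), map_sum]
  refine Finset.sum_congr rfl fun i _ => ?_
  have hsingle : (Pi.single i (Y i ω) : I → ℝ) = Y i ω • Pi.single i 1 := by
    rw [← Pi.single_smul, smul_eq_mul, mul_one]
  rw [Finset.restrict_def, hsingle, map_smul, smul_eq_mul, mul_comm]

/-- The initial value of a sequence followed by its increments. -/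
def backwardDiff {G : Type*} [Sub G] (F : ℕ → G) : ℕ → G
  | 0 => F 0
  | j + 1 => F (j + 1) - F j

lemma sum_range_backwardDiff {G : Type*} [AddCommGroup G] (F : ℕ → G) (i : ℕ) :
    ∑ j ∈ Finset.range (i + 1), backwardDiff F j = F i := by
  rw [Finset.sum_range_succ']
  exact (congrArg (· + F 0) (Finset.sum_range_sub F i)).trans (sub_add_cancel _ _)

lemma backwardDiff_apply {A G : Type*} [Sub G] (F : ℕ → A → G) (j : ℕ) (a : A) :
    backwardDiff F j a = backwardDiff (fun i => F i a) j := by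
  cases j <;> rfl

/-- `Z` restricted to the times in `S` is a GSP-Wiener process: a centered Gaussian process with
covariance `min (k + s) (k + t)`. Continuity of the paths is not part of the definition. -/
structure IsGSPWiener {Ω : Type*} [MeasurableSpace Ω] (k : ℝ) (S : Set ℝ) (Z : ℝ → Ω → ℝ)
    (P : Measure Ω) : Prop where
  isGaussianProcess : IsGaussianProcess (fun t : S => Z t) P
  integral_eq_zero : ∀ t ∈ S, P[Z t] = 0
  covariance_eq : ∀ s ∈ S, ∀ t ∈ S, cov[Z s, Z t; P] = min (k + s) (k + t)

namespace IsGSPWiener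

variable {Ω : Type*} [MeasurableSpace Ω] {P : Measure Ω} {k : ℝ} {S : Set ℝ} {Z Z' : ℝ → Ω → ℝ}

lemma of_map_sum_eq_gaussianReal [IsProbabilityMeasure P] (hk : ∀ t ∈ S, 0 ≤ k + t)
    (h : ∀ (m : ℕ) (t : Fin m → ℝ), (∀ i, t i ∈ S) → ∀ c : Fin m → ℝ,
      P.map (fun ω => ∑ i, c i * Z (t i) ω) =
        gaussianReal 0 (∑ i, ∑ j, c i * c j * min (k + t i) (k + t j)).toNNReal) :
    IsGSPWiener k S Z P := by
  have hproc : IsGaussianProcess (fun t : S => Z t) P :=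
    isGaussianProcess_of_map_sum_eq_gaussianReal fun m t c =>
      ⟨_, _, h m (fun i => t i) (fun i => (t i).2) c⟩
  have hmeas : ∀ t ∈ S, AEMeasurable (Z t) P := fun t ht => hproc.aemeasurable ⟨t, ht⟩
  have hL2 : ∀ t ∈ S, MemLp (Z t) 2 P := fun t ht => (hproc.hasGaussianLaw_eval ⟨t, ht⟩).memLp_two
  have hlaw : ∀ t ∈ S, HasLaw (Z t) (gaussianReal 0 (k + t).toNNReal) P := fun t ht =>
    ⟨hmeas t ht, by simpa using h 1 (fun _ => t) (fun _ => ht) fun _ => 1⟩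
  have hvar : ∀ t ∈ S, Var[Z t; P] = k + t := fun t ht => by
    rw [(hlaw t ht).variance_eq, variance_id_gaussianReal, Real.coe_toNNReal _ (hk t ht)]
  refine ⟨hproc, fun t ht => ?_, fun s hs t ht => ?_⟩
  · rw [(hlaw t ht).integral_eq, integral_id_gaussianReal]
  have hlaw_add : HasLaw (Z s + Z t)
      (gaussianReal 0 (k + s + (k + t) + 2 * min (k + s) (k + t)).toNNReal) P := by
    refine ⟨(hmeas s hs).add (hmeas t ht), ?_⟩
    have hmap := h 2 ![s, t] (by simp [Fin.forall_fin_two, hs, ht]) fun _ => 1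
    have hsum : k + s + min (k + s) (k + t) + (min (k + s) (k + t) + (k + t)) =
      k + s + (k + t) + 2 * min (k + s) (k + t) := by ring
    simp only [Fin.sum_univ_two, one_mul, Matrix.cons_val_zero, Matrix.cons_val_one,
      min_self, min_comm (k + t), hsum] at hmap
    exact hmap
  have hvar_add : Var[Z s + Z t; P] = k + s + (k + t) + 2 * min (k + s) (k + t) := by
    rw [hlaw_add.variance_eq, variance_id_gaussianReal, Real.coe_toNNReal]
    linarith [hk s hs, hk t ht, le_min (hk s hs) (hk t ht)]
  linarith [variance_add (hL2 s hs) (hL2 t ht), hvar s hs, hvar t ht]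

lemma congr (hZ : IsGSPWiener k S Z P) (h : ∀ t ∈ S, Z t =ᵐ[P] Z' t) : IsGSPWiener k S Z' P where
  isGaussianProcess := hZ.isGaussianProcess.congr fun t => h t t.2
  integral_eq_zero t ht := (integral_congr_ae (h t ht)).symm.trans (hZ.integral_eq_zero t ht)
  covariance_eq s hs t ht := by
    rw [← hZ.covariance_eq s hs t ht, covariance, covariance, integral_congr_ae (h s hs),
      integral_congr_ae (h t ht)]
    refine integral_congr_ae ?_
    filter_upwards [h s hs, h t ht] with ω hs ht
    rw [hs, ht]

lemma isFiniteMeasure (hZ : IsGSPWiener k S Z P) {t : ℝ} (ht : t ∈ S) : IsFiniteMeasure P :=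
  have := (hZ.isGaussianProcess.hasGaussianLaw_eval ⟨t, ht⟩).isProbabilityMeasure
  inferInstance

lemma memLp_two (hZ : IsGSPWiener k S Z P) {t : ℝ} (ht : t ∈ S) : MemLp (Z t) 2 P :=
  (hZ.isGaussianProcess.hasGaussianLaw_eval ⟨t, ht⟩).memLp_two

protected lemma add_nonneg (hZ : IsGSPWiener k S Z P) {t : ℝ} (ht : t ∈ S) : 0 ≤ k + t := by
  rw [← min_self (k + t), ← hZ.covariance_eq t ht t ht,
    covariance_self (hZ.memLp_two ht).1.aemeasurable]
  exact variance_nonneg _ _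

lemma covariance_sub_right_eq_zero (hZ : IsGSPWiener k S Z P) {s u v : ℝ} (hs : s ∈ S)
    (hu : u ∈ S) (hv : v ∈ S) (hsu : s ≤ u) (huv : u ≤ v) : cov[Z s, Z v - Z u; P] = 0 := by
  have := hZ.isFiniteMeasure hs
  rw [covariance_sub_right (hZ.memLp_two hs) (hZ.memLp_two hv) (hZ.memLp_two hu),
    hZ.covariance_eq s hs v hv, hZ.covariance_eq s hs u hu, min_eq_left (by linarith),
    min_eq_left (by linarith), sub_self]

lemma hasLaw_eval (hZ : IsGSPWiener k S Z P) {t : ℝ} (ht : t ∈ S) :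
    HasLaw (Z t) (gaussianReal 0 (k + t).toNNReal) P where
  aemeasurable := (hZ.memLp_two ht).1.aemeasurable
  map_eq := by
    rw [(hZ.isGaussianProcess.hasGaussianLaw_eval ⟨t, ht⟩).map_eq_gaussianReal,
      ← covariance_self (hZ.memLp_two ht).1.aemeasurable, hZ.integral_eq_zero t ht,
      hZ.covariance_eq t ht t ht, min_self]

lemma hasLaw_sub (hZ : IsGSPWiener k S Z P) {s t : ℝ} (hs : s ∈ S) (ht : t ∈ S) (hst : s ≤ t) :
    HasLaw (Z t - Z s) (gaussianReal 0 (t - s).toNNReal) P := by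
  have := hZ.isFiniteMeasure hs
  have hgauss : HasGaussianLaw (Z t - Z s) P :=
    hZ.isGaussianProcess.hasGaussianLaw_sub (s := ⟨t, ht⟩) (t := ⟨s, hs⟩)
  have hmean : P[Z t - Z s] = 0 := by
    rw [integral_sub' ((hZ.memLp_two ht).integrable one_le_two)
      ((hZ.memLp_two hs).integrable one_le_two), hZ.integral_eq_zero t ht,
      hZ.integral_eq_zero s hs, sub_self]
  have hvar : Var[Z t - Z s; P] = t - s := by
    rw [variance_sub (hZ.memLp_two ht) (hZ.memLp_two hs),
      ← covariance_self (hZ.memLp_two ht).1.aemeasurable,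
      ← covariance_self (hZ.memLp_two hs).1.aemeasurable, hZ.covariance_eq t ht t ht,
      hZ.covariance_eq s hs s hs, hZ.covariance_eq t ht s hs, min_self,
      min_self, min_eq_right (by linarith)]
    ring
  refine ⟨hgauss.aemeasurable, ?_⟩
  rw [hgauss.map_eq_gaussianReal, hmean, hvar]

section Grid

variable {t : ℕ → ℝ}

lemma isGaussianProcess_backwardDiff (hZ : IsGSPWiener k S Z P) (htS : ∀ i, t i ∈ S) :
    IsGaussianProcess (backwardDiff fun i => Z (t i)) P := by
  classical
  let pt : ℕ → S := fun i => ⟨t i, htS i⟩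
  refine hZ.isGaussianProcess.of_isGaussianProcess fun
    | 0 => ⟨{pt 0}, .proj ⟨pt 0, by simp⟩, fun ω => rfl⟩
    | j + 1 => ⟨{pt (j + 1), pt j}, .proj ⟨pt (j + 1), by simp⟩ - .proj ⟨pt j, by simp⟩,
        fun ω => rfl⟩

lemma covariance_backwardDiff (hZ : IsGSPWiener k S Z P) (ht : Monotone t) (htS : ∀ i, t i ∈ S)
    {i j : ℕ} (hij : i ≠ j) :
    cov[backwardDiff (fun i => Z (t i)) i, backwardDiff (fun i => Z (t i)) j; P] = 0 := by
  have := hZ.isFiniteMeasure (htS 0)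
  wlog hlt : i < j generalizing i j
  · rw [covariance_comm]
    exact this hij.symm (by omega)
  obtain ⟨l, rfl⟩ : ∃ l, j = l + 1 := ⟨j - 1, by omega⟩
  have hzero : ∀ p ≤ l, cov[Z (t p), Z (t (l + 1)) - Z (t l); P] = 0 := fun p hp =>
    hZ.covariance_sub_right_eq_zero (htS _) (htS _) (htS _) (ht hp) (ht l.le_succ)
  cases i with
  | zero => exact hzero 0 l.zero_le
  | succ p =>
    have hL2 : ∀ i, MemLp (Z (t i)) 2 P := fun i => hZ.memLp_two (htS i)
    change cov[Z (t (p + 1)) - Z (t p), Z (t (l + 1)) - Z (t l); P] = 0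
    rw [covariance_sub_left (hL2 _) (hL2 _) ((hL2 _).sub (hL2 _)), hzero _ (by omega),
      hzero _ (by omega), sub_self]

lemma iIndepFun_backwardDiff (hZ : IsGSPWiener k S Z P) (ht : Monotone t)
    (htS : ∀ i, t i ∈ S) : iIndepFun (backwardDiff fun i => Z (t i)) P :=
  iIndepFun_iff_finset.2 fun I =>
    ((hZ.isGaussianProcess_backwardDiff htS).hasGaussianLaw I).iIndepFun_of_covariance_eq_zero
      fun _ _ hij => hZ.covariance_backwardDiff ht htS (Subtype.coe_injective.ne hij)

lemma hasLaw_backwardDiff (hZ : IsGSPWiener k S Z P) (ht : Monotone t)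
    (htS : ∀ i, t i ∈ S) (j : ℕ) : HasLaw (backwardDiff (fun i => Z (t i)) j)
      (gaussianReal 0 (backwardDiff (fun i => k + t i) j).toNNReal) P := by
  cases j with
  | zero => exact hZ.hasLaw_eval (htS 0)
  | succ j =>
    simpa only [backwardDiff, add_sub_add_left_eq_sub] using
      hZ.hasLaw_sub (htS j) (htS (j + 1)) (ht j.le_succ)

end Grid

lemma exists_measurable_uncurry {a b : ℝ} (hZ : IsGSPWiener k (Set.Icc a b) Z P) (hab : a ≤ b)
    (hcont : ∀ᵐ ω ∂P, ContinuousOn (fun t => Z t ω) (Set.Icc a b)) :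
    ∃ Z' : ℝ → Ω → ℝ, Measurable (Function.uncurry Z') ∧ IsGSPWiener k (Set.Icc a b) Z' P ∧
      ∀ᵐ ω ∂P, ∀ t ∈ Set.Icc a b, Z t ω = Z' t ω := by
  obtain ⟨Z', hZ', hmod⟩ := exists_measurable_uncurry_of_ae_continuous
    (Z := fun t => Z (Set.projIcc a b hab t))
    (fun t => (hZ.hasLaw_eval (Set.projIcc a b hab t).2).aemeasurable)
    (hcont.mono fun ω hω =>
      (continuousOn_iff_continuous_domRestrict.1 hω).comp continuous_projIcc)
  have hagree : ∀ᵐ ω ∂P, ∀ t ∈ Set.Icc a b, Z t ω = Z' t ω := by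
    filter_upwards [hmod] with ω hω t ht
    rw [hω t, Set.projIcc_of_mem hab ht]
  exact ⟨Z', hZ', hZ.congr fun t ht => hagree.mono fun ω hω => hω t ht, hagree⟩

end IsGSPWiener

/-! ### Gaussian estimates -/

section Gaussian

open scoped NNReal

variable {Ω : Type*} [MeasurableSpace Ω] {P : Measure Ω}

lemma lintegral_enorm_sq_eq_of_hasLaw_gaussianReal {Y : Ω → ℝ} {v : ℝ≥0}
    (hY : HasLaw Y (gaussianReal 0 v) P) : ∫⁻ ω, ‖Y ω‖ₑ ^ 2 ∂P = v := by
  have hgauss : HasGaussianLaw Y P := hY.hasGaussianLaw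
  have := hgauss.isProbabilityMeasure
  have hvar := ofReal_variance hgauss.memLp_two
  rw [hY.variance_eq, variance_id_gaussianReal, ENNReal.ofReal_coe_nnreal, evariance,
    hY.integral_eq, integral_id_gaussianReal] at hvar
  simpa only [sub_zero] using hvar.symm

lemma integral_exp_neg_mul_sub_sq_gaussianReal_le (m b : ℝ) {v : ℝ≥0} (hv : v ≠ 0) {c : ℝ}
    (hc : 0 < c) : ∫ x, Real.exp (-c * (x - b) ^ 2) ∂gaussianReal m v ≤ √(1 / (2 * c * v)) := by
  have : (0 : ℝ) < v := by exact_mod_cast hv.bot_lt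
  have hint : Integrable fun x : ℝ => Real.exp (-c * (x - b) ^ 2) :=
    (integrable_exp_neg_mul_sq hc).comp_sub_right b
  have hdensity : ∀ x, gaussianPDFReal m v x ≤ (√(2 * Real.pi * v))⁻¹ := fun x =>
    mul_le_of_le_one_right (by positivity)
      (Real.exp_le_one_iff.2 (div_nonpos_of_nonpos_of_nonneg (by nlinarith) (by positivity)))
  rw [integral_gaussianReal_eq_integral_smul hv]
  calc ∫ x, gaussianPDFReal m v x • Real.exp (-c * (x - b) ^ 2)
      ≤ ∫ x, (√(2 * Real.pi * v))⁻¹ * Real.exp (-c * (x - b) ^ 2) := by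
        refine integral_mono_of_nonneg (.of_forall fun x => ?_) (hint.const_mul _)
          (.of_forall fun x => mul_le_mul_of_nonneg_right (hdensity x) (Real.exp_nonneg _))
        exact mul_nonneg (gaussianPDFReal_nonneg m v x) (Real.exp_nonneg _)
    _ = (√(2 * Real.pi * v))⁻¹ * √(Real.pi / c) := by
        rw [integral_const_mul, integral_sub_right_eq_self fun x => Real.exp (-c * x ^ 2),
          integral_gaussian]
    _ = √(1 / (2 * c * v)) := by
        rw [← Real.sqrt_inv, ← Real.sqrt_mul (by positivity)]
        congr 1
        field_simp

lemma integrable_exp_mul_abs_gaussianReal (v : ℝ≥0) (u : ℝ) :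
    Integrable (fun x => Real.exp (u * |x|)) (gaussianReal 0 v) :=
  integrable_exp_mul_abs (integrable_exp_mul_gaussianReal u) (integrable_exp_mul_gaussianReal (-u))

lemma mgf_abs_gaussianReal_le (v : ℝ≥0) (u : ℝ) :
    mgf (fun x => |x|) (gaussianReal 0 v) u ≤ 2 * Real.exp (v * u ^ 2 / 2) := by
  have hmgf : ∀ w, mgf id (gaussianReal 0 v) w = Real.exp (v * w ^ 2 / 2) := fun w => by
    simp only [mgf_id_gaussianReal, zero_mul, zero_add]
  have hle : ∀ x : ℝ, Real.exp (u * |x|) ≤ Real.exp (u * x) + Real.exp (-u * x) := fun x => by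
    rcases abs_choice x with hx | hx
    · rw [hx]; exact le_add_of_nonneg_right (Real.exp_nonneg _)
    · rw [hx, mul_neg, ← neg_mul]; exact le_add_of_nonneg_left (Real.exp_nonneg _)
  calc mgf (fun x => |x|) (gaussianReal 0 v) u
      ≤ ∫ x, Real.exp (u * x) + Real.exp (-u * x) ∂gaussianReal 0 v :=
        integral_mono (integrable_exp_mul_abs_gaussianReal v u)
          ((integrable_exp_mul_gaussianReal u).add (integrable_exp_mul_gaussianReal (-u))) hle
    _ = mgf id (gaussianReal 0 v) u + mgf id (gaussianReal 0 v) (-u) :=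
        integral_add (integrable_exp_mul_gaussianReal u) (integrable_exp_mul_gaussianReal (-u))
    _ = 2 * Real.exp (v * u ^ 2 / 2) := by rw [hmgf, hmgf, neg_sq, two_mul]

lemma lintegral_exp_mul_sum_abs_le {ι : Type*} {Y : ι → Ω → ℝ} {v : ι → ℝ≥0}
    (hindep : iIndepFun Y P) (hY : ∀ j, HasLaw (Y j) (gaussianReal 0 (v j)) P) (s : Finset ι)
    (u : ℝ) :
    ∫⁻ ω, ENNReal.ofReal (Real.exp (u * ∑ j ∈ s, |Y j ω|)) ∂P ≤
      ENNReal.ofReal (2 ^ s.card * Real.exp (u ^ 2 / 2 * ∑ j ∈ s, (v j : ℝ))) := by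
  have := hindep.isProbabilityMeasure
  have hmeas : ∀ j, AEMeasurable (fun ω => |Y j ω|) P := fun j => (hY j).aemeasurable.abs
  have hindep_abs : iIndepFun (fun j ω => |Y j ω|) P :=
    hindep.comp₀ (fun _ x => |x|) (fun j => (hY j).aemeasurable) fun _ => by fun_prop
  have hmgf_eq : ∀ j, mgf (fun ω => |Y j ω|) P u = mgf (fun x => |x|) (gaussianReal 0 (v j)) u :=
    fun j => (hY j).integral_comp (f := fun x => Real.exp (u * |x|)) (by fun_prop)
  have hprod : mgf (∑ j ∈ s, fun ω => |Y j ω|) P u =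
      ∏ j ∈ s, mgf (fun x => |x|) (gaussianReal 0 (v j)) u :=
    (hindep_abs.mgf_sum₀ hmeas s).trans (Finset.prod_congr rfl fun j _ => hmgf_eq j)
  have hint : Integrable (fun ω => Real.exp (u * (∑ j ∈ s, fun ω => |Y j ω|) ω)) P := by
    rw [← mgf_pos_iff, hprod]
    exact Finset.prod_pos fun j _ => mgf_pos (integrable_exp_mul_abs_gaussianReal (v j) u)
  have hsum : ∀ ω, ∑ j ∈ s, |Y j ω| = (∑ j ∈ s, fun ω => |Y j ω|) ω := fun ω => by
    rw [Finset.sum_apply]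
  simp only [hsum]
  rw [← ofReal_integral_eq_lintegral_ofReal hint (.of_forall fun _ => Real.exp_nonneg _)]
  refine ENNReal.ofReal_le_ofReal ?_
  calc ∫ ω, Real.exp (u * (∑ j ∈ s, fun ω => |Y j ω|) ω) ∂P
      = ∏ j ∈ s, mgf (fun x => |x|) (gaussianReal 0 (v j)) u := hprod
    _ ≤ ∏ j ∈ s, 2 * Real.exp (v j * u ^ 2 / 2) :=
        Finset.prod_le_prod (fun _ _ => mgf_nonneg) fun j _ => mgf_abs_gaussianReal_le (v j) u
    _ = 2 ^ s.card * Real.exp (u ^ 2 / 2 * ∑ j ∈ s, (v j : ℝ)) := by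
        rw [Finset.prod_mul_distrib, Finset.prod_const, ← Real.exp_sum, Finset.mul_sum]
        congr 3 with j
        ring

lemma mgf_sub_sq_neg_le_half {Y : Ω → ℝ} {m : ℝ} {v : ℝ≥0} (hY : HasLaw Y (gaussianReal m v) P)
    (b : ℝ) {c : ℝ} (hcv : 2 ≤ c * v) : mgf (fun ω => (Y ω - b) ^ 2) P (-c) ≤ 1 / 2 := by
  have hv : v ≠ 0 := by
    rintro rfl
    norm_num at hcv
  have hc : 0 < c := pos_of_mul_pos_left (two_pos.trans_le hcv) v.2
  calc mgf (fun ω => (Y ω - b) ^ 2) P (-c)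
      = ∫ x, Real.exp (-c * (x - b) ^ 2) ∂gaussianReal m v :=
        hY.integral_comp (f := fun x => Real.exp (-c * (x - b) ^ 2)) (by fun_prop)
    _ ≤ √(1 / (2 * c * v)) := integral_exp_neg_mul_sub_sq_gaussianReal_le m b hv hc
    _ ≤ 1 / 2 := by
        refine Real.sqrt_le_iff.2 ⟨by norm_num, ?_⟩
        rw [div_le_iff₀ (by nlinarith)]
        linarith

section SumSq

variable {ι : Type*} {Y : ι → Ω → ℝ} {m : ι → ℝ} {w : ι → ℝ≥0} {s : Finset ι} {v : ℝ≥0}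

lemma mgf_sum_sub_sq_neg_le (hindep : iIndepFun Y P)
    (hY : ∀ j, HasLaw (Y j) (gaussianReal (m j) (w j)) P) (hv : v ≠ 0) (hvw : ∀ j ∈ s, v ≤ w j)
    (b : ι → ℝ) : mgf (∑ j ∈ s, fun ω => (Y j ω - b j) ^ 2) P (-(2 / v)) ≤ (1 / 2) ^ s.card := by
  have hv' : (0 : ℝ) < v := by exact_mod_cast hv.bot_lt
  have hindep_sq : iIndepFun (fun j ω => (Y j ω - b j) ^ 2) P :=
    hindep.comp₀ (fun j x => (x - b j) ^ 2) (fun j => (hY j).aemeasurable) fun _ => by fun_prop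
  have hmgf : ∀ j ∈ s, mgf (fun ω => (Y j ω - b j) ^ 2) P (-(2 / v)) ≤ 1 / 2 := fun j hj =>
    mgf_sub_sq_neg_le_half (hY j) (b j) <| by
      rw [div_mul_eq_mul_div, le_div_iff₀ hv']
      exact mul_le_mul_of_nonneg_left (hvw j hj) zero_le_two
  rw [hindep_sq.mgf_sum₀ (fun j => ((hY j).aemeasurable.sub_const _).pow_const 2) s]
  exact (Finset.prod_le_prod (fun _ _ => mgf_nonneg) hmgf).trans_eq (Finset.prod_const _)

lemma measure_sum_sub_sq_le_exp (hindep : iIndepFun Y P)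
    (hY : ∀ j, HasLaw (Y j) (gaussianReal (m j) (w j)) P) (hv : v ≠ 0) (hvw : ∀ j ∈ s, v ≤ w j)
    (b : ι → ℝ) : P {ω | ∑ j ∈ s, (Y j ω - b j) ^ 2 ≤ s.card * (v / 8)} ≤
      ENNReal.ofReal (Real.exp (-(s.card / 4))) := by
  have := hindep.isProbabilityMeasure
  let D : Ω → ℝ := ∑ j ∈ s, fun ω => (Y j ω - b j) ^ 2
  have hD : ∀ ω, D ω = ∑ j ∈ s, (Y j ω - b j) ^ 2 := fun ω => Finset.sum_apply ω s _
  have hmeas : AEMeasurable D P :=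
    Finset.aemeasurable_sum s fun j _ => ((hY j).aemeasurable.sub_const _).pow_const 2
  have hint : Integrable (fun ω => Real.exp (-(2 / v) * D ω)) P := by
    refine .of_bound (hmeas.const_mul _).exp.aestronglyMeasurable 1 (.of_forall fun ω => ?_)
    rw [Real.norm_of_nonneg (Real.exp_nonneg _), Real.exp_le_one_iff, neg_mul, neg_nonpos, hD]
    exact mul_nonneg (by positivity) (Finset.sum_nonneg fun j _ => sq_nonneg _)
  simp only [← hD]
  rw [← ofReal_measureReal]
  refine ENNReal.ofReal_le_ofReal ?_
  calc P.real {ω | D ω ≤ s.card * (v / 8)}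
      ≤ Real.exp (-(-(2 / v)) * (s.card * (v / 8))) * mgf D P (-(2 / v)) :=
        measure_le_le_exp_mul_mgf _ (neg_nonpos.2 (by positivity)) hint
    _ ≤ Real.exp (s.card * (1 / 4)) * Real.exp (-(1 / 2)) ^ s.card := by
        have hexp : -(-(2 / v : ℝ)) * (s.card * (v / 8)) = s.card * (1 / 4) := by
          field_simp
          ring
        rw [hexp]
        gcongr
        exact (mgf_sum_sub_sq_neg_le hindep hY hv hvw b).trans <| by
          gcongr
          linarith [Real.add_one_le_exp (-(1 / 2))]
    _ = Real.exp (-(s.card / 4)) := by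
        rw [← Real.exp_nat_mul, ← Real.exp_add]
        ring_nf

end SumSq

end Gaussian

/-! ### Lower bound -/

lemma sum_range_sub_sq_le (x : ℕ → ℝ) (d : ℕ) :
    ∑ j ∈ Finset.range d, (x (j + 1) - x j) ^ 2 ≤ 4 * ∑ i ∈ Finset.range (d + 1), x i ^ 2 :=
  calc ∑ j ∈ Finset.range d, (x (j + 1) - x j) ^ 2
      ≤ ∑ j ∈ Finset.range d, (2 * x (j + 1) ^ 2 + 2 * x j ^ 2) :=
        Finset.sum_le_sum fun j _ => by nlinarith [sq_nonneg (x (j + 1) + x j)]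
    _ = 2 * ∑ j ∈ Finset.range d, x (j + 1) ^ 2 + 2 * ∑ j ∈ Finset.range d, x j ^ 2 := by
        rw [Finset.sum_add_distrib, Finset.mul_sum, Finset.mul_sum]
    _ ≤ 4 * ∑ i ∈ Finset.range (d + 1), x i ^ 2 := by
        linarith [Finset.sum_range_succ' (fun i => x i ^ 2) d,
          Finset.sum_range_succ (fun i => x i ^ 2) d, sq_nonneg (x 0), sq_nonneg (x d)]

lemma lintegral_Ico_zero_mul {f : ℝ → ℝ≥0∞} (hf : Measurable f) {h : ℝ} (hh : 0 ≤ h) (m : ℕ) :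
    ∫⁻ x in Set.Ico 0 (m * h), f x =
      ∫⁻ s in Set.Ico 0 h, ∑ i ∈ Finset.range m, f (s + i * h) := by
  induction m with
  | zero => simp
  | succ m ih =>
    have hsplit : Set.Ico 0 ((m + 1 : ℕ) * h) =
        Set.Ico 0 (m * h) ∪ Set.Ico (m * h) (m * h + h) := by
      rw [Set.Ico_union_Ico_eq_Ico (by positivity) (by linarith)]
      push_cast
      ring_nf
    have hshift : ∫⁻ x in Set.Ico (m * h) (m * h + h), f x =
        ∫⁻ s in Set.Ico 0 h, f (s + m * h) := by
      rw [← (measurePreserving_add_right volume (m * h : ℝ)).setLIntegral_comp_preimage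
        measurableSet_Ico hf]
      simp
    rw [hsplit, lintegral_union measurableSet_Ico Set.Ico_disjoint_Ico_same, ih, hshift]
    simp_rw [Finset.sum_range_succ]
    exact (lintegral_add_right _ (by fun_prop)).symm

/-- The times `s, s + h, …, s + d * h`, continued by a constant so as to stay in an interval. -/
noncomputable def stoppedGrid (s h : ℝ) (d i : ℕ) : ℝ := s + (min i d : ℕ) * h

section StoppedGrid

variable {s h : ℝ} {d i : ℕ}

lemma stoppedGrid_of_le (hi : i ≤ d) : stoppedGrid s h d i = s + i * h := by
  rw [stoppedGrid, min_eq_left hi]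

lemma monotone_stoppedGrid (hh : 0 ≤ h) : Monotone (stoppedGrid s h d) := fun i j hij => by
  unfold stoppedGrid
  gcongr

lemma stoppedGrid_mem_Icc (hh : 0 ≤ h) : stoppedGrid s h d i ∈ Set.Icc s (s + d * h) := by
  constructor
  · exact le_add_of_nonneg_right (by positivity)
  · unfold stoppedGrid
    gcongr
    exact min_le_right i d

lemma stoppedGrid_succ_sub (hi : i < d) : stoppedGrid s h d (i + 1) - stoppedGrid s h d i = h := by
  rw [stoppedGrid_of_le hi, stoppedGrid_of_le hi.le]
  push_cast
  ring

end StoppedGrid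

namespace IsGSPWiener

variable {Ω : Type*} [MeasurableSpace Ω] {P : Measure Ω} {k : ℝ} {S : Set ℝ} {Z : ℝ → Ω → ℝ}

lemma measure_sum_grid_sub_sq_lt_le (hZ : IsGSPWiener k S Z P) {s h : ℝ} (hh : 0 < h) {d : ℕ}
    (hS : Set.Icc s (s + d * h) ⊆ S) (x : ℝ → ℝ) :
    P {ω | ∑ i ∈ Finset.range (d + 1), ‖Z (s + i * h) ω - x (s + i * h)‖ₑ ^ 2 <
      ENNReal.ofReal (d * h / 32)} ≤ ENNReal.ofReal (Real.exp (-(d / 4))) := by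
  let t : ℕ → ℝ := stoppedGrid s h d
  have ht : Monotone t := monotone_stoppedGrid hh.le
  have htS : ∀ i, t i ∈ S := fun i => hS (stoppedGrid_mem_Icc hh.le)
  let Y : ℕ → Ω → ℝ := fun j => Z (t (j + 1)) - Z (t j)
  have hindep : iIndepFun Y P := (hZ.iIndepFun_backwardDiff ht htS).precomp Nat.succ_injective
  have hlaw : ∀ j, HasLaw (Y j) (gaussianReal 0 (t (j + 1) - t j).toNNReal) P := fun j =>
    hZ.hasLaw_sub (htS _) (htS _) (ht j.le_succ)
  have hvar : ∀ j ∈ Finset.range d, h.toNNReal ≤ (t (j + 1) - t j).toNNReal := fun j hj =>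
    (congrArg Real.toNNReal (stoppedGrid_succ_sub (Finset.mem_range.1 hj))).ge
  have hsmall := measure_sum_sub_sq_le_exp hindep hlaw (Real.toNNReal_pos.2 hh).ne' hvar
    fun j => x (t (j + 1)) - x (t j)
  rw [Finset.card_range, Real.coe_toNNReal _ hh.le] at hsmall
  refine (measure_mono fun ω hω => ?_).trans hsmall
  have hgrid : ∑ i ∈ Finset.range (d + 1), ‖Z (s + i * h) ω - x (s + i * h)‖ₑ ^ 2 =
      ENNReal.ofReal (∑ i ∈ Finset.range (d + 1), (Z (t i) ω - x (t i)) ^ 2) := by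
    rw [ENNReal.ofReal_sum_of_nonneg fun _ _ => sq_nonneg _]
    refine Finset.sum_congr rfl fun i hi => ?_
    rw [← stoppedGrid_of_le (Finset.mem_range_succ_iff.1 hi), enorm_sq_eq_ofReal_sq]
  rw [Set.mem_ofPred_eq, hgrid, ENNReal.ofReal_lt_ofReal_iff_of_nonneg
    (Finset.sum_nonneg fun _ _ => sq_nonneg _)] at hω
  calc ∑ j ∈ Finset.range d, (Y j ω - (x (t (j + 1)) - x (t j))) ^ 2
      = ∑ j ∈ Finset.range d, (Z (t (j + 1)) ω - x (t (j + 1)) - (Z (t j) ω - x (t j))) ^ 2 :=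
        Finset.sum_congr rfl fun j _ => by rw [sub_sub_sub_comm]; rfl
    _ ≤ 4 * ∑ i ∈ Finset.range (d + 1), (Z (t i) ω - x (t i)) ^ 2 :=
        sum_range_sub_sq_le (fun i => Z (t i) ω - x (t i)) d
    _ ≤ d * (h / 8) := by linarith

end IsGSPWiener

lemma lintegral_iInf_sum_grid_le {Ω A : Type*} [MeasurableSpace Ω] {P : Measure Ω} [SFinite P]
    (α : Finset A) {f : A → ℝ → Ω → ℝ≥0∞} (hf : ∀ a ∈ α, Measurable (Function.uncurry (f a)))
    {h : ℝ} (hh : 0 ≤ h) (m : ℕ) :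
    ∫⁻ s in Set.Ico 0 h, ∫⁻ ω, ⨅ a ∈ α, ∑ i ∈ Finset.range m, f a (s + i * h) ω ∂P ≤
      ∫⁻ ω, ⨅ a ∈ α, (∫⁻ t in Set.Ico 0 (m * h), f a t ω) ∂P := by
  have hmeas : Measurable fun p : ℝ × Ω =>
      ⨅ a ∈ α, ∑ i ∈ Finset.range m, f a (p.1 + i * h) p.2 :=
    .biInf _ α.countable_toSet fun a ha => Finset.measurable_fun_sum _ fun i _ =>
      (hf a ha).comp ((measurable_fst.add_const _).prodMk measurable_snd)
  rw [lintegral_lintegral_swap hmeas.aemeasurable]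
  refine lintegral_mono fun ω => le_iInf₂ fun a ha => ?_
  rw [lintegral_Ico_zero_mul (hf a ha).of_uncurry_right hh]
  exact lintegral_mono fun s => iInf₂_le a ha

lemma exists_nat_mul_exp_neg_le_half {n : ℕ} (hn : 3 ≤ n) :
    ∃ d : ℕ, 1 ≤ d ∧ (d : ℝ) ≤ 9 * Real.log n ∧ n * Real.exp (-(d / 4)) ≤ 1 / 2 := by
  have hn' : (3 : ℝ) ≤ n := by exact_mod_cast hn
  have hlog : 1 ≤ Real.log n :=
    (Real.le_log_iff_exp_le (by linarith)).2 (Real.exp_one_lt_three.le.trans hn')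
  let d : ℕ := ⌈4 * Real.log (2 * n)⌉₊
  have hlog_two_mul : Real.log (2 * n) = Real.log 2 + Real.log n :=
    Real.log_mul two_ne_zero (by positivity)
  have hd_ge : 4 * Real.log (2 * n) ≤ d := Nat.le_ceil _
  refine ⟨d, ?_, ?_, ?_⟩
  · exact Nat.ceil_pos.2 (by linarith [Real.log_two_gt_d9])
  · have := Nat.ceil_lt_add_one (a := 4 * Real.log (2 * n)) (by linarith [Real.log_two_gt_d9])
    linarith [Real.log_two_lt_d9]
  · calc n * Real.exp (-(d / 4)) ≤ n * Real.exp (-Real.log (2 * n)) := by gcongr; linarith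
      _ = 1 / 2 := by rw [Real.exp_neg, Real.exp_log (by positivity)]; field_simp

section LowerBound

variable {Ω : Type*} [MeasurableSpace Ω] {P : Measure Ω} {Z : ℝ → Ω → ℝ} {T : ℝ}
  {X : Ω → Lp ℝ 2 (volume.restrict (Set.Icc 0 T))}

lemma distortion_eq_lintegral_iInf_Ico
    (hXZ : ∀ᵐ ω ∂P, (X ω : ℝ → ℝ) =ᵐ[volume.restrict (Set.Icc 0 T)] fun t => Z t ω)
    (α : Finset (Lp ℝ 2 (volume.restrict (Set.Icc 0 T)))) :
    distortion P X α = ∫⁻ ω, ⨅ a ∈ α, (∫⁻ t in Set.Ico 0 T, ‖Z t ω - a t‖ₑ ^ 2) ∂P := by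
  refine lintegral_congr_ae ?_
  filter_upwards [hXZ] with ω hω
  congr! 3 with a
  rw [enorm_sub_sq_eq_lintegral (X ω) a hω .rfl, setLIntegral_congr Ico_ae_eq_Icc]

variable {k : ℝ}

lemma IsGSPWiener.le_distortion [IsProbabilityMeasure P] (hGW : IsGSPWiener k (Set.Icc 0 T) Z P)
    (hZ : Measurable (Function.uncurry Z))
    (hXZ : ∀ᵐ ω ∂P, (X ω : ℝ → ℝ) =ᵐ[volume.restrict (Set.Icc 0 T)] fun t => Z t ω)
    (α : Finset (Lp ℝ 2 (volume.restrict (Set.Icc 0 T)))) {h : ℝ} (hh : 0 < h) {d : ℕ}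
    (hd : (d + 1 : ℕ) * h = T) (hα : α.card * Real.exp (-(d / 4)) ≤ 1 / 2) :
    ENNReal.ofReal (d * h ^ 2 / 64) ≤ distortion P X α := by
  have hmeas : ∀ a ∈ α, Measurable (Function.uncurry fun t ω => ‖Z t ω - a t‖ₑ ^ 2) := fun a _ =>
    ((hZ.sub ((Lp.stronglyMeasurable a).measurable.comp measurable_fst)).enorm).pow_const 2
  have hhalf : ENNReal.ofReal (1 / 2) ≤ 1 - α.card * ENNReal.ofReal (Real.exp (-(d / 4))) := by
    rw [← ENNReal.ofReal_natCast, ← ENNReal.ofReal_mul (by positivity), ← ENNReal.ofReal_one,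
      ← ENNReal.ofReal_sub _ (by positivity)]
    exact ENNReal.ofReal_le_ofReal (by linarith)
  have hpoint : ∀ s ∈ Set.Ico 0 h, ENNReal.ofReal (d * h / 64) ≤
      ∫⁻ ω, ⨅ a ∈ α, ∑ i ∈ Finset.range (d + 1), ‖Z (s + i * h) ω - a (s + i * h)‖ₑ ^ 2 ∂P := by
    intro s hs
    have hS : Set.Icc s (s + d * h) ⊆ Set.Icc 0 T := Set.Icc_subset_Icc hs.1 <| by
      push_cast at hd
      linarith [hs.2]
    calc ENNReal.ofReal (d * h / 64)
        = ENNReal.ofReal (d * h / 32) * ENNReal.ofReal (1 / 2) := by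
          rw [← ENNReal.ofReal_mul (by positivity)]
          ring_nf
      _ ≤ _ := mul_le_mul_right hhalf _
      _ ≤ _ := mul_one_sub_card_mul_le_lintegral_iInf α
          (fun a ha => (Finset.measurable_fun_sum _ fun i _ =>
            (hmeas a ha).of_uncurry_left).aemeasurable)
          fun a _ => hGW.measure_sum_grid_sub_sq_lt_le hh hS a
  calc ENNReal.ofReal (d * h ^ 2 / 64)
      = ∫⁻ s in Set.Ico 0 h, ENNReal.ofReal (d * h / 64) := by
        rw [setLIntegral_const, Real.volume_Ico, sub_zero, ← ENNReal.ofReal_mul (by positivity)]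
        ring_nf
    _ ≤ _ := setLIntegral_mono' measurableSet_Ico hpoint
    _ ≤ _ := lintegral_iInf_sum_grid_le α hmeas hh.le (d + 1)
    _ = distortion P X α := by rw [distortion_eq_lintegral_iInf_Ico hXZ, hd]

lemma IsGSPWiener.memLp_two_of_ae_eq [SFinite P] (hGW : IsGSPWiener k (Set.Icc 0 T) Z P)
    (hZ : Measurable (Function.uncurry Z)) (hX : AEStronglyMeasurable X P)
    (hXZ : ∀ᵐ ω ∂P, (X ω : ℝ → ℝ) =ᵐ[volume.restrict (Set.Icc 0 T)] fun t => Z t ω) :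
    MemLp X 2 P := by
  have hX_sq : ∀ᵐ ω ∂P, ‖X ω‖ₑ ^ 2 = ∫⁻ t in Set.Icc 0 T, ‖Z t ω‖ₑ ^ 2 := by
    filter_upwards [hXZ] with ω hω
    simpa only [sub_zero, Pi.zero_apply] using
      enorm_sub_sq_eq_lintegral (X ω) 0 hω (Lp.coeFn_zero ℝ 2 _)
  have hsq : eLpNorm X 2 P ^ 2 < ∞ := by
    calc eLpNorm X 2 P ^ 2
        = ∫⁻ ω, (∫⁻ t in Set.Icc 0 T, ‖Z t ω‖ₑ ^ 2) ∂P :=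
          (eLpNorm_two_sq X).trans (lintegral_congr_ae hX_sq)
      _ = ∫⁻ t in Set.Icc 0 T, ∫⁻ ω, ‖Z t ω‖ₑ ^ 2 ∂P :=
          (lintegral_lintegral_swap (hZ.enorm.pow_const 2).aemeasurable).symm
      _ ≤ ∫⁻ _ in Set.Icc 0 T, ENNReal.ofReal (k + T) :=
          setLIntegral_mono' measurableSet_Icc fun _ ht => by
            rw [lintegral_enorm_sq_eq_of_hasLaw_gaussianReal (hGW.hasLaw_eval ht)]
            exact ENNReal.ofReal_le_ofReal (by linarith [ht.2])
      _ < ∞ := by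
          rw [setLIntegral_const]
          exact ENNReal.mul_lt_top ENNReal.ofReal_lt_top isCompact_Icc.measure_lt_top
  exact ⟨hX, (ENNReal.pow_lt_top_iff.1 hsq).resolve_right two_ne_zero⟩

lemma IsGSPWiener.le_quantErr [IsProbabilityMeasure P] (hGW : IsGSPWiener k (Set.Icc 0 T) Z P)
    (hT : 0 < T) (hZ : Measurable (Function.uncurry Z)) (hX : AEStronglyMeasurable X P)
    (hXZ : ∀ᵐ ω ∂P, (X ω : ℝ → ℝ) =ᵐ[volume.restrict (Set.Icc 0 T)] fun t => Z t ω)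
    {n : ℕ} (hn : 3 ≤ n) : T / 48 / √(Real.log n) ≤ quantErr P X n := by
  obtain ⟨d, hd_one, hd_le, hexp⟩ := exists_nat_mul_exp_neg_le_half hn
  have hd_one' : (1 : ℝ) ≤ d := by exact_mod_cast hd_one
  have hmesh : ((d + 1 : ℕ) : ℝ) * (T / (d + 1 : ℕ)) = T := mul_div_cancel₀ _ (by positivity)
  calc T / 48 / √(Real.log n) = √(T ^ 2 / (2304 * Real.log n)) := by
        rw [Real.sqrt_div (sq_nonneg T), Real.sqrt_sq hT.le, Real.sqrt_mul (by norm_num),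
          show (2304 : ℝ) = 48 ^ 2 by norm_num, Real.sqrt_sq (by norm_num), div_div]
    _ ≤ √(d * (T / (d + 1 : ℕ)) ^ 2 / 64) := by
        refine Real.sqrt_le_sqrt ?_
        calc T ^ 2 / (2304 * Real.log n) ≤ T ^ 2 / (256 * d) :=
              div_le_div_of_nonneg_left (sq_nonneg T) (by positivity) (by linarith)
          _ ≤ d * (T / (d + 1 : ℕ)) ^ 2 / 64 := by
            have hsq : ((d + 1 : ℕ) : ℝ) ^ 2 ≤ 4 * d ^ 2 := by push_cast; nlinarith
            rw [div_pow, mul_div_assoc', div_div, div_le_div_iff₀ (by positivity) (by positivity)]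
            nlinarith [mul_le_mul_of_nonneg_left hsq (sq_nonneg T)]
    _ ≤ quantErr P X n :=
        sqrt_le_quantErr (hGW.memLp_two_of_ae_eq hZ hX hXZ) (by omega) fun α _ hα =>
          hGW.le_distortion hZ hXZ α (by positivity) hmesh <| le_trans (by gcongr) hexp

end LowerBound

/-! ### Upper bound -/

section LatticeCode

/-- The integer vectors of `ℓ¹`-norm at most `M`. -/
noncomputable def l1Ball (ι : Type*) [Fintype ι] [DecidableEq ι] (M : ℕ) : Finset (ι → ℤ) :=
  {b ∈ Fintype.piFinset fun _ => Finset.Icc (-M : ℤ) M | ∑ j, (b j).natAbs ≤ M}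

variable {ι : Type*} [Fintype ι] [DecidableEq ι] {M d : ℕ}

lemma mem_l1Ball {b : ι → ℤ} : b ∈ l1Ball ι M ↔ ∑ j, (b j).natAbs ≤ M := by
  rw [l1Ball, Finset.mem_filter, Fintype.mem_piFinset, and_iff_right_iff_imp]
  intro hb j
  have : (b j).natAbs ≤ M :=
    (Finset.single_le_sum (fun _ _ => Nat.zero_le _) (Finset.mem_univ j)).trans hb
  rw [Finset.mem_Icc]
  omega

lemma sum_Icc_half_pow_natAbs_le (M : ℤ) : ∑ z ∈ Finset.Icc (-M) M, (1 / 2 : ℝ) ^ z.natAbs ≤ 3 := by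
  have hnonneg : HasSum (fun n : ℕ => (1 / 2 : ℝ) ^ (n : ℤ).natAbs) 2 := by
    simpa only [Int.natAbs_natCast] using hasSum_geometric_two
  have hneg : HasSum (fun n : ℕ => (1 / 2 : ℝ) ^ (-(n + 1 : ℤ)).natAbs) (1 / 2 * 2) := by
    have hterm : ∀ n : ℕ, (1 / 2 : ℝ) ^ (-(n + 1 : ℤ)).natAbs = 1 / 2 * (1 / 2) ^ n := fun n => by
      rw [← pow_succ', show (-(n + 1 : ℤ)).natAbs = n + 1 by omega]
    simp only [hterm]
    exact hasSum_geometric_two.mul_left (1 / 2)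
  have hsum : HasSum (fun z : ℤ => (1 / 2 : ℝ) ^ z.natAbs) (2 + 1 / 2 * 2) :=
    HasSum.of_nat_of_neg_add_one hnonneg hneg
  exact (sum_le_hasSum _ (fun z _ => by positivity) hsum).trans_eq (by norm_num)

lemma card_l1Ball_le : ((l1Ball ι M).card : ℝ) ≤ 2 ^ M * 3 ^ Fintype.card ι := by
  -- Give `b` the weight `2 ^ (-‖b‖₁)`, which is at least `2 ^ (-M)` on the ball.
  have hweight : ∀ b ∈ l1Ball ι M, (1 / 2 : ℝ) ^ M ≤ ∏ j, (1 / 2) ^ (b j).natAbs := fun b hb => by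
    rw [Finset.prod_pow_eq_pow_sum]
    exact pow_le_pow_of_le_one (by norm_num) (by norm_num) (mem_l1Ball.1 hb)
  have hcard : (l1Ball ι M).card * (1 / 2 : ℝ) ^ M ≤ 3 ^ Fintype.card ι :=
    calc (l1Ball ι M).card * (1 / 2 : ℝ) ^ M
        ≤ ∑ b ∈ l1Ball ι M, ∏ j, (1 / 2 : ℝ) ^ (b j).natAbs := by
          rw [← nsmul_eq_mul]; exact Finset.card_nsmul_le_sum _ _ _ hweight
      _ ≤ ∑ b ∈ Fintype.piFinset fun _ : ι => Finset.Icc (-M : ℤ) M,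
            ∏ j, (1 / 2 : ℝ) ^ (b j).natAbs :=
          Finset.sum_le_sum_of_subset_of_nonneg (Finset.filter_subset _ _)
            fun _ _ _ => by positivity
      _ = ∏ _j : ι, ∑ z ∈ Finset.Icc (-M : ℤ) M, (1 / 2 : ℝ) ^ z.natAbs :=
          (Finset.prod_univ_sum (fun _ => Finset.Icc (-M : ℤ) M)
            fun _ z => (1 / 2 : ℝ) ^ z.natAbs).symm
      _ ≤ ∏ _j : ι, 3 := Finset.prod_le_prod (fun _ _ => by positivity)
          fun _ _ => sum_Icc_half_pow_natAbs_le M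
      _ = 3 ^ Fintype.card ι := by rw [Finset.prod_const, Finset.card_univ]
  calc ((l1Ball ι M).card : ℝ) = 2 ^ M * ((l1Ball ι M).card * (1 / 2 : ℝ) ^ M) := by
        rw [one_div, inv_pow]; field_simp
    _ ≤ 2 ^ M * 3 ^ Fintype.card ι := by gcongr

/-- The integer-valued path with increments `b`. -/
def codePath (b : Fin d → ℤ) (i : ℕ) : ℤ := ∑ j : Fin d with j.val ≤ i, b j

lemma codePath_backwardDiff (F : ℕ → ℤ) {i : ℕ} (hi : i < d) :
    codePath (fun j : Fin d => backwardDiff F j) i = F i := by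
  have hrange : {j ∈ Finset.range d | j ≤ i} = Finset.range (i + 1) := by
    ext j; simp only [Finset.mem_filter, Finset.mem_range]; omega
  rw [codePath, Finset.sum_filter,
    Fin.sum_univ_eq_sum_range (fun j => if j ≤ i then backwardDiff F j else 0) d,
    ← Finset.sum_filter, hrange, sum_range_backwardDiff]

lemma abs_codePath_le (b : Fin d → ℤ) (i : ℕ) : |codePath b i| ≤ ∑ j, |b j| :=
  (Finset.abs_sum_le_sum_abs _ _).trans
    (Finset.sum_le_sum_of_subset_of_nonneg (Finset.filter_subset _ _) fun _ _ _ => abs_nonneg _)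

lemma abs_floor_sub_floor_le (x y : ℝ) : (|⌊x⌋ - ⌊y⌋| : ℝ) ≤ |x - y| + 1 := by
  calc (|⌊x⌋ - ⌊y⌋| : ℝ) = |(x - y) - (Int.fract x - Int.fract y)| := by
        rw [Int.fract, Int.fract]; ring_nf
    _ ≤ |x - y| + |Int.fract x - Int.fract y| := abs_sub _ _
    _ ≤ |x - y| + 1 := by
        gcongr
        exact (abs_sub_lt_of_nonneg_of_lt (Int.fract_nonneg x) (Int.fract_lt_one x)
          (Int.fract_nonneg y) (Int.fract_lt_one y)).le

lemma natAbs_backwardDiff_floor_le (x : ℕ → ℝ) (j : ℕ) :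
    ((backwardDiff (fun i => ⌊x i⌋) j).natAbs : ℝ) ≤ |backwardDiff x j| + 1 := by
  rw [Nat.cast_natAbs]
  cases j with
  | zero => simpa [backwardDiff] using abs_floor_sub_floor_le (x 0) 0
  | succ j => simpa [backwardDiff] using abs_floor_sub_floor_le (x (j + 1)) (x j)

lemma abs_le_sum_abs_backwardDiff (x : ℕ → ℝ) {i : ℕ} (hi : i < d) :
    |x i| ≤ ∑ j ∈ Finset.range d, |backwardDiff x j| := by
  conv_lhs => rw [← sum_range_backwardDiff x i]
  exact (Finset.abs_sum_le_sum_abs _ _).trans <| Finset.sum_le_sum_of_subset_of_nonneg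
    (Finset.range_mono hi) fun _ _ _ => abs_nonneg _

lemma exists_mem_l1Ball_sub_sq_le (x : ℕ → ℝ) {L : ℝ} (hM : L + d ≤ M) :
    ∃ b ∈ l1Ball (Fin d) M, ∀ i < d, (x i - codePath b i) ^ 2 ≤
      1 + 2 * Real.exp (2 * ∑ j ∈ Finset.range d, |backwardDiff x j| - L) := by
  set V : ℝ := ∑ j ∈ Finset.range d, |backwardDiff x j| with hV
  rcases le_or_gt V L with hVL | hVL
  · refine ⟨fun j => backwardDiff (fun i => ⌊x i⌋) j, mem_l1Ball.2 ?_, fun i hi => ?_⟩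
    · rw [← @Nat.cast_le ℝ, Nat.cast_sum]
      calc ∑ j : Fin d, ((backwardDiff (fun i => ⌊x i⌋) j).natAbs : ℝ)
          ≤ ∑ j : Fin d, (|backwardDiff x j| + 1) :=
            Finset.sum_le_sum fun j _ => natAbs_backwardDiff_floor_le x j
        _ = V + d := by
            rw [Finset.sum_add_distrib, Fin.sum_univ_eq_sum_range fun j => |backwardDiff x j|]
            simp [hV]
        _ ≤ M := by linarith
    · rw [codePath_backwardDiff _ hi]
      have hfract : (x i - ⌊x i⌋) ^ 2 ≤ 1 :=
        pow_le_one₀ (Int.fract_nonneg (x i)) (Int.fract_lt_one (x i)).le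
      exact hfract.trans (le_add_of_nonneg_right (by positivity))
  · refine ⟨0, mem_l1Ball.2 (by simp), fun i hi => ?_⟩
    have hV0 : 0 ≤ V := Finset.sum_nonneg fun _ _ => abs_nonneg _
    have hzero : codePath (0 : Fin d → ℤ) i = 0 := Finset.sum_const_zero
    calc (x i - codePath (0 : Fin d → ℤ) i) ^ 2 = |x i| ^ 2 := by
          rw [hzero, Int.cast_zero, sub_zero, sq_abs]
      _ ≤ V ^ 2 := by gcongr; exact abs_le_sum_abs_backwardDiff x hi
      _ ≤ 2 * Real.exp V := by linarith [Real.quadratic_le_exp_of_nonneg hV0]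
      _ ≤ 2 * Real.exp (2 * V - L) := by gcongr; linarith
      _ ≤ 1 + 2 * Real.exp (2 * V - L) := le_add_of_nonneg_left zero_le_one

lemma exists_mem_l1Ball_sub_mul_sq_le (x : ℕ → ℝ) {δ : ℝ} (hδ : 0 < δ) {L : ℝ} (hM : L + d ≤ M) :
    ∃ b ∈ l1Ball (Fin d) M, ∀ i < d, (x i - δ * codePath b i) ^ 2 ≤
      δ ^ 2 * (1 + 2 * Real.exp (2 / δ * ∑ j ∈ Finset.range d, |backwardDiff x j| - L)) := by
  have hscale : ∀ j, |backwardDiff (fun i => x i / δ) j| = |backwardDiff x j| / δ := fun j => by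
    cases j with
    | zero => exact (abs_div _ _).trans (by rw [abs_of_pos hδ]; rfl)
    | succ j => simp only [backwardDiff, ← sub_div, abs_div, abs_of_pos hδ]
  obtain ⟨b, hb, hbound⟩ := exists_mem_l1Ball_sub_sq_le (fun i => x i / δ) hM
  refine ⟨b, hb, fun i hi => ?_⟩
  have hsum : 2 * ∑ j ∈ Finset.range d, |backwardDiff (fun i => x i / δ) j| =
      2 / δ * ∑ j ∈ Finset.range d, |backwardDiff x j| := by
    simp only [hscale, ← Finset.sum_div]
    ring
  calc (x i - δ * codePath b i) ^ 2 = δ ^ 2 * (x i / δ - codePath b i) ^ 2 := by field_simp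
    _ ≤ _ := by rw [← hsum]; gcongr; exact hbound i hi

end LatticeCode

/-- The step function with value `F i` on `[i * h, (i + 1) * h)`. -/
noncomputable def stepFun (h : ℝ) (F : ℕ → ℝ) (t : ℝ) : ℝ := F ⌊t / h⌋₊

lemma stepFun_add_mul {h s : ℝ} (hs : s ∈ Set.Ico 0 h) (F : ℕ → ℝ) (i : ℕ) :
    stepFun h F (s + i * h) = F i := by
  have hh : 0 < h := hs.1.trans_lt hs.2
  have hfloor : ⌊(s + i * h) / h⌋₊ = i := by
    rw [add_div, mul_div_cancel_right₀ _ hh.ne', Nat.floor_add_natCast (div_nonneg hs.1 hh.le),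
      Nat.floor_eq_zero.2 ((div_lt_one hh).2 hs.2), zero_add]
  rw [stepFun, hfloor]

lemma measurable_stepFun (h : ℝ) (F : ℕ → ℝ) : Measurable (stepFun h F) :=
  (measurable_from_nat (f := F)).comp (Nat.measurable_floor.comp (measurable_id.div_const h))

lemma memLp_stepFun_codePath (μ : Measure ℝ) [IsFiniteMeasure μ] (p : ℝ≥0∞) (h δ : ℝ) {d : ℕ}
    (b : Fin d → ℤ) : MemLp (stepFun h fun i => δ * codePath b i) p μ := by
  refine .of_bound (measurable_stepFun h _).aestronglyMeasurable (|δ| * (∑ j, |b j| : ℤ))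
    (.of_forall fun t => ?_)
  rw [stepFun, Real.norm_eq_abs, abs_mul, ← Int.cast_abs]
  gcongr
  exact abs_codePath_le b _

open scoped Classical in
/-- The codebook of step functions of mesh `h` whose increments are `δ` times an integer vector of
`ℓ¹`-norm at most `M`. -/
noncomputable def stepCodebook (μ : Measure ℝ) [IsFiniteMeasure μ] (h δ : ℝ) (d M : ℕ) :
    Finset (Lp ℝ 2 μ) :=
  (l1Ball (Fin d) M).image fun b => (memLp_stepFun_codePath μ 2 h δ b).toLp

section StepCodebook

variable {μ : Measure ℝ} [IsFiniteMeasure μ] {h δ : ℝ} {d M : ℕ}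

lemma stepCodebook_nonempty : (stepCodebook μ h δ d M).Nonempty := by
  classical
  exact Finset.Nonempty.image ⟨0, mem_l1Ball.2 (by simp)⟩ _

lemma card_stepCodebook_le : ((stepCodebook μ h δ d M).card : ℝ) ≤ 2 ^ M * 3 ^ d := by
  classical
  exact (Nat.cast_le.2 Finset.card_image_le).trans (card_l1Ball_le.trans_eq (by simp))

lemma iInf_stepCodebook_le_lintegral (f : Lp ℝ 2 μ) {x : ℝ → ℝ} (hf : f =ᵐ[μ] x) {b : Fin d → ℤ}
    (hb : b ∈ l1Ball (Fin d) M) : ⨅ a ∈ stepCodebook μ h δ d M, ‖f - a‖ₑ ^ 2 ≤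
      ∫⁻ t, ‖x t - stepFun h (fun i => δ * codePath b i) t‖ₑ ^ 2 ∂μ := by
  classical
  exact (iInf₂_le _ (Finset.mem_image_of_mem _ hb)).trans_eq
    (enorm_sub_sq_eq_lintegral f _ hf (MemLp.coeFn_toLp _))

end StepCodebook

lemma enorm_sub_sq_le_two_mul_add (x y z : ℝ) :
    ‖x - z‖ₑ ^ 2 ≤ 2 * ‖x - y‖ₑ ^ 2 + 2 * ‖y - z‖ₑ ^ 2 := by
  have hreal : (x - z) ^ 2 ≤ 2 * (x - y) ^ 2 + 2 * (y - z) ^ 2 := by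
    nlinarith [sq_nonneg (x - y - (y - z))]
  simp only [enorm_sq_eq_ofReal_sq]
  refine (ENNReal.ofReal_le_ofReal hreal).trans_eq ?_
  rw [ENNReal.ofReal_add (by positivity) (by positivity), ENNReal.ofReal_mul zero_le_two,
    ENNReal.ofReal_mul zero_le_two, ENNReal.ofReal_ofNat]

lemma lintegral_enorm_sub_stepFun_sq_le {x : ℝ → ℝ} (hx : Measurable x) {F : ℕ → ℝ} {h T c : ℝ}
    {d : ℕ} (hh : 0 ≤ h) (hd : d * h = T) (hF : ∀ i < d, (x (i * h) - F i) ^ 2 ≤ c) :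
    ∫⁻ t in Set.Icc 0 T, ‖x t - stepFun h F t‖ₑ ^ 2 ≤
      2 * (∫⁻ s in Set.Ico 0 h, ∑ i ∈ Finset.range d, ‖x (s + i * h) - x (i * h)‖ₑ ^ 2) +
        2 * ENNReal.ofReal (T * c) := by
  have hmeas : Measurable fun t => ‖x t - stepFun h F t‖ₑ ^ 2 :=
    (hx.sub (measurable_stepFun h F)).enorm.pow_const 2
  have hterm : ∀ s ∈ Set.Ico 0 h,
      ∑ i ∈ Finset.range d, ‖x (s + i * h) - stepFun h F (s + i * h)‖ₑ ^ 2 ≤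
        2 * ∑ i ∈ Finset.range d, ‖x (s + i * h) - x (i * h)‖ₑ ^ 2 +
          2 * (d * ENNReal.ofReal c) := by
    intro s hs
    calc ∑ i ∈ Finset.range d, ‖x (s + i * h) - stepFun h F (s + i * h)‖ₑ ^ 2
        ≤ ∑ i ∈ Finset.range d,
            (2 * ‖x (s + i * h) - x (i * h)‖ₑ ^ 2 + 2 * ENNReal.ofReal c) := by
          refine Finset.sum_le_sum fun i hi => ?_
          rw [stepFun_add_mul hs]
          refine (enorm_sub_sq_le_two_mul_add _ (x (i * h)) _).trans ?_
          gcongr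
          rw [enorm_sq_eq_ofReal_sq]
          exact ENNReal.ofReal_le_ofReal (hF i (Finset.mem_range.1 hi))
      _ = _ := by
          rw [Finset.sum_add_distrib, ← Finset.mul_sum, Finset.sum_const, Finset.card_range,
            nsmul_eq_mul, mul_left_comm]
  have hlength : (d : ℝ≥0∞) * ENNReal.ofReal c * ENNReal.ofReal h = ENNReal.ofReal (T * c) := by
    rw [mul_right_comm, ← ENNReal.ofReal_natCast, ← ENNReal.ofReal_mul (Nat.cast_nonneg d), hd,
      ENNReal.ofReal_mul (hd ▸ by positivity)]
  calc ∫⁻ t in Set.Icc 0 T, ‖x t - stepFun h F t‖ₑ ^ 2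
      = ∫⁻ s in Set.Ico 0 h,
          ∑ i ∈ Finset.range d, ‖x (s + i * h) - stepFun h F (s + i * h)‖ₑ ^ 2 := by
        rw [← setLIntegral_congr Ico_ae_eq_Icc, ← hd, lintegral_Ico_zero_mul hmeas hh]
    _ ≤ ∫⁻ s in Set.Ico 0 h, (2 * (∑ i ∈ Finset.range d, ‖x (s + i * h) - x (i * h)‖ₑ ^ 2) +
          2 * (d * ENNReal.ofReal c)) := setLIntegral_mono' measurableSet_Ico hterm
    _ = _ := by
        rw [lintegral_add_right _ measurable_const, setLIntegral_const, Real.volume_Ico, sub_zero,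
          lintegral_const_mul _ (by fun_prop), mul_assoc 2, hlength]

lemma iInf_stepCodebook_le {T : ℝ} {f : Lp ℝ 2 (volume.restrict (Set.Icc 0 T))} {x : ℝ → ℝ}
    (hx : Measurable x) (hf : f =ᵐ[volume.restrict (Set.Icc 0 T)] x) {h δ L : ℝ} {d M : ℕ}
    (hh : 0 ≤ h) (hδ : 0 < δ) (hd : d * h = T) (hM : L + d ≤ M) :
    ⨅ a ∈ stepCodebook (volume.restrict (Set.Icc 0 T)) h δ d M, ‖f - a‖ₑ ^ 2 ≤
      2 * (∫⁻ s in Set.Ico 0 h, ∑ i ∈ Finset.range d, ‖x (s + i * h) - x (i * h)‖ₑ ^ 2) +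
        2 * ENNReal.ofReal (T * (δ ^ 2 * (1 + 2 * Real.exp (2 / δ *
          ∑ j ∈ Finset.range d, |backwardDiff (fun i => x (stoppedGrid 0 h d i)) j| - L)))) := by
  obtain ⟨b, hb, hbound⟩ :=
    exists_mem_l1Ball_sub_mul_sq_le (fun i => x (stoppedGrid 0 h d i)) hδ hM
  refine (iInf_stepCodebook_le_lintegral f hf hb).trans
    (lintegral_enorm_sub_stepFun_sq_le hx hh hd fun i hi => ?_)
  simpa only [stoppedGrid_of_le hi.le, zero_add] using hbound i hi

lemma lintegral_ofReal_mul_one_add_two_mul_le {Ω : Type*} [MeasurableSpace Ω]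
    {P : Measure Ω} [IsProbabilityMeasure P] {f : Ω → ℝ} (hf_nonneg : ∀ ω, 0 ≤ f ω)
    (hf : ∫⁻ ω, ENNReal.ofReal (f ω) ∂P ≤ 1) {c : ℝ} (hc : 0 ≤ c) :
    ∫⁻ ω, ENNReal.ofReal (c * (1 + 2 * f ω)) ∂P ≤ ENNReal.ofReal (3 * c) := by
  have hsplit : ∀ ω, ENNReal.ofReal (c * (1 + 2 * f ω)) =
      ENNReal.ofReal c * (1 + 2 * ENNReal.ofReal (f ω)) := fun ω => by
    rw [ENNReal.ofReal_mul hc, ENNReal.ofReal_add zero_le_one (by linarith [hf_nonneg ω]),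
      ENNReal.ofReal_mul zero_le_two, ENNReal.ofReal_one, ENNReal.ofReal_ofNat]
  simp only [hsplit]
  rw [lintegral_const_mul' _ _ ENNReal.ofReal_ne_top, lintegral_add_left measurable_const,
    lintegral_const_mul' _ _ ENNReal.ofNat_ne_top, lintegral_const, measure_univ, mul_one]
  calc ENNReal.ofReal c * (1 + 2 * ∫⁻ ω, ENNReal.ofReal (f ω) ∂P)
      ≤ ENNReal.ofReal c * (1 + 2 * 1) := by gcongr
    _ = ENNReal.ofReal (3 * c) := by
        rw [mul_comm 3, ENNReal.ofReal_mul hc, ENNReal.ofReal_ofNat]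
        norm_num

lemma log_le_two_mul_log_mul_natLog {b n : ℕ} (hb : 1 < b) (hn : b ≤ n) :
    Real.log n ≤ 2 * Real.log b * Nat.log b n := by
  have hlog_b : 0 ≤ Real.log b := Real.log_natCast_nonneg b
  have hone : (1 : ℝ) ≤ Nat.log b n := by exact_mod_cast Nat.log_pos hb hn
  have hn_pos : 0 < n := by omega
  calc Real.log n ≤ Real.log ((b : ℝ) ^ (Nat.log b n + 1)) :=
        Real.log_le_log (by positivity) (by exact_mod_cast (Nat.lt_pow_succ_log_self hb n).le)
    _ = (Nat.log b n + 1) * Real.log b := by rw [Real.log_pow]; push_cast; rfl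
    _ ≤ 2 * Real.log b * Nat.log b n := by nlinarith

namespace IsGSPWiener

variable {Ω : Type*} [MeasurableSpace Ω] {P : Measure Ω} {k : ℝ} {S : Set ℝ} {Z : ℝ → Ω → ℝ}

lemma lintegral_exp_mul_sum_abs_backwardDiff_sub_le_one (hZ : IsGSPWiener k S Z P) {t : ℕ → ℝ}
    (ht : Monotone t) (htS : ∀ i, t i ∈ S) {d : ℕ} {u L : ℝ} (hL : d + u ^ 2 / 2 * (k + t d) ≤ L) :
    ∫⁻ ω, ENNReal.ofReal (Real.exp
      (u * ∑ j ∈ Finset.range d, |backwardDiff (fun i => Z (t i)) j ω| - L)) ∂P ≤ 1 := by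
  have hvar_nonneg : ∀ j, 0 ≤ backwardDiff (fun i => k + t i) j := fun
    | 0 => hZ.add_nonneg (htS 0)
    | j + 1 => sub_nonneg.2 (add_le_add_right (ht j.le_succ) k)
  have hvar_sum : ∑ j ∈ Finset.range d, ((backwardDiff (fun i => k + t i) j).toNNReal : ℝ) ≤
      k + t d := by
    simp only [Real.coe_toNNReal _ (hvar_nonneg _)]
    exact (Finset.sum_le_sum_of_subset_of_nonneg (Finset.range_mono d.le_succ)
      fun j _ _ => hvar_nonneg j).trans_eq (sum_range_backwardDiff _ d)
  have hexp : 2 ^ d * Real.exp (u ^ 2 / 2 * (k + t d)) ≤ Real.exp L := by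
    calc 2 ^ d * Real.exp (u ^ 2 / 2 * (k + t d))
        ≤ Real.exp 1 ^ d * Real.exp (u ^ 2 / 2 * (k + t d)) := by
          gcongr
          linarith [Real.add_one_le_exp 1]
      _ = Real.exp (d + u ^ 2 / 2 * (k + t d)) := by rw [← Real.exp_nat_mul, mul_one, Real.exp_add]
      _ ≤ Real.exp L := Real.exp_le_exp.2 hL
  have hmoment := lintegral_exp_mul_sum_abs_le (hZ.iIndepFun_backwardDiff ht htS)
    (hZ.hasLaw_backwardDiff ht htS) (Finset.range d) u
  rw [Finset.card_range] at hmoment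
  simp only [sub_eq_add_neg, Real.exp_add, ENNReal.ofReal_mul (Real.exp_nonneg _)]
  rw [lintegral_mul_const' _ _ ENNReal.ofReal_ne_top]
  calc _ ≤ ENNReal.ofReal (2 ^ d * Real.exp (u ^ 2 / 2 * (k + t d))) *
        ENNReal.ofReal (Real.exp (-L)) := by
        gcongr
        exact hmoment.trans (ENNReal.ofReal_le_ofReal (by gcongr))
    _ ≤ ENNReal.ofReal (Real.exp L) * ENNReal.ofReal (Real.exp (-L)) := by gcongr
    _ = 1 := by
        rw [← ENNReal.ofReal_mul (Real.exp_nonneg L), ← Real.exp_add, add_neg_cancel,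
          Real.exp_zero, ENNReal.ofReal_one]

lemma lintegral_sum_grid_sub_sq_le [SFinite P] (hGW : IsGSPWiener k S Z P)
    (hZ : Measurable (Function.uncurry Z)) {h : ℝ} (hh : 0 ≤ h) {d : ℕ}
    (hS : Set.Icc 0 (d * h) ⊆ S) :
    ∫⁻ ω, (∫⁻ s in Set.Ico 0 h,
        ∑ i ∈ Finset.range d, ‖Z (s + i * h) ω - Z (i * h) ω‖ₑ ^ 2) ∂P ≤
      ENNReal.ofReal (d * h ^ 2) := by
  have hmeas : ∀ i : ℕ,
      Measurable (Function.uncurry fun s ω => ‖Z (s + i * h) ω - Z (i * h) ω‖ₑ ^ 2) := fun i =>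
    ((hZ.comp ((measurable_fst.add_const _).prodMk measurable_snd)).sub
      (hZ.of_uncurry_left.comp measurable_snd)).enorm.pow_const 2
  have hincr : ∀ s ∈ Set.Ico 0 h, ∀ i ∈ Finset.range d,
      ∫⁻ ω, ‖Z (s + i * h) ω - Z (i * h) ω‖ₑ ^ 2 ∂P ≤ ENNReal.ofReal h := by
    intro s hs i hi
    have hi' : ((i : ℝ) + 1) * h ≤ d * h := by
      gcongr
      exact_mod_cast Finset.mem_range.1 hi
    have hih : 0 ≤ i * h := by positivity
    have hlaw := hGW.hasLaw_sub (s := i * h) (t := s + i * h) (hS ⟨hih, by linarith⟩)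
      (hS ⟨by linarith [hs.1], by linarith [hs.2]⟩) (by linarith [hs.1])
    calc _ = ENNReal.ofReal (s + i * h - i * h) :=
          lintegral_enorm_sq_eq_of_hasLaw_gaussianReal hlaw
      _ ≤ ENNReal.ofReal h := ENNReal.ofReal_le_ofReal (by linarith [hs.2])
  rw [← lintegral_lintegral_swap (Finset.measurable_fun_sum _ fun i _ => hmeas i).aemeasurable]
  calc _ ≤ ∫⁻ _ in Set.Ico 0 h, d * ENNReal.ofReal h := by
        refine setLIntegral_mono' measurableSet_Ico fun _ hs => ?_
        rw [lintegral_finsetSum _ fun i _ => (hmeas i).of_uncurry_left]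
        exact (Finset.sum_le_card_nsmul _ _ _ (hincr _ hs)).trans_eq (by simp)
    _ = ENNReal.ofReal (d * h ^ 2) := by
        rw [setLIntegral_const, Real.volume_Ico, sub_zero, mul_assoc,
          ← ENNReal.ofReal_mul hh, ← sq, ENNReal.ofReal_mul (Nat.cast_nonneg d),
          ENNReal.ofReal_natCast]

end IsGSPWiener

section UpperBound

variable {Ω : Type*} [MeasurableSpace Ω] {P : Measure Ω} {Z : ℝ → Ω → ℝ} {T : ℝ}
  {X : Ω → Lp ℝ 2 (volume.restrict (Set.Icc 0 T))} [IsProbabilityMeasure P] {k : ℝ}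

lemma IsGSPWiener.distortion_stepCodebook_le (hGW : IsGSPWiener k (Set.Icc 0 T) Z P)
    (hZ : Measurable (Function.uncurry Z))
    (hXZ : ∀ᵐ ω ∂P, (X ω : ℝ → ℝ) =ᵐ[volume.restrict (Set.Icc 0 T)] fun t => Z t ω)
    {h δ L : ℝ} {d M : ℕ} (hh : 0 ≤ h) (hδ : 0 < δ) (hd : d * h = T)
    (hL : d + (2 / δ) ^ 2 / 2 * (k + T) ≤ L) (hM : L + d ≤ M) :
    distortion P X (stepCodebook (volume.restrict (Set.Icc 0 T)) h δ d M) ≤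
      ENNReal.ofReal (2 * T * h + 6 * T * δ ^ 2) := by
  have hT : 0 ≤ T := hd ▸ by positivity
  let t : ℕ → ℝ := stoppedGrid 0 h d
  have ht : Monotone t := monotone_stoppedGrid hh
  have htS : ∀ i, t i ∈ Set.Icc 0 T := fun i => by
    simpa only [zero_add, hd] using stoppedGrid_mem_Icc (s := 0) (d := d) hh
  have htd : t d = T := by rw [← hd, ← zero_add (d * h)]; exact stoppedGrid_of_le le_rfl
  let W : Ω → ℝ := fun ω =>
    Real.exp (2 / δ * ∑ j ∈ Finset.range d, |backwardDiff (fun i => Z (t i)) j ω| - L)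
  have hW : ∫⁻ ω, ENNReal.ofReal (W ω) ∂P ≤ 1 :=
    hGW.lintegral_exp_mul_sum_abs_backwardDiff_sub_le_one ht htS (by rwa [htd])
  have hpath : ∀ᵐ ω ∂P,
      ⨅ a ∈ stepCodebook (volume.restrict (Set.Icc 0 T)) h δ d M, ‖X ω - a‖ₑ ^ 2 ≤
        2 * (∫⁻ s in Set.Ico 0 h,
          ∑ i ∈ Finset.range d, ‖Z (s + i * h) ω - Z (i * h) ω‖ₑ ^ 2) +
        2 * ENNReal.ofReal (T * δ ^ 2 * (1 + 2 * W ω)) := by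
    filter_upwards [hXZ] with ω hω
    simpa only [W, backwardDiff_apply, mul_assoc] using
      iInf_stepCodebook_le hZ.of_uncurry_right hω hh hδ hd hM
  calc _ ≤ ∫⁻ ω, (2 * (∫⁻ s in Set.Ico 0 h,
          ∑ i ∈ Finset.range d, ‖Z (s + i * h) ω - Z (i * h) ω‖ₑ ^ 2) +
        2 * ENNReal.ofReal (T * δ ^ 2 * (1 + 2 * W ω))) ∂P := lintegral_mono_ae hpath
    _ ≤ 2 * ENNReal.ofReal (d * h ^ 2) + 2 * ENNReal.ofReal (3 * (T * δ ^ 2)) := by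
        have hW_meas :
            AEMeasurable (fun ω => 2 * ENNReal.ofReal (T * δ ^ 2 * (1 + 2 * W ω))) P := by
          have := fun j => (hGW.hasLaw_backwardDiff ht htS j).aemeasurable
          fun_prop
        rw [lintegral_add_right' _ hW_meas, lintegral_const_mul' _ _ ENNReal.ofNat_ne_top,
          lintegral_const_mul' _ _ ENNReal.ofNat_ne_top]
        gcongr
        · exact hGW.lintegral_sum_grid_sub_sq_le hZ hh (by rw [hd])
        · exact lintegral_ofReal_mul_one_add_two_mul_le (fun ω => Real.exp_nonneg _) hW
            (by positivity)
    _ = ENNReal.ofReal (2 * T * h + 6 * T * δ ^ 2) := by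
        rw [← mul_add, ← ENNReal.ofReal_add (by positivity) (by positivity),
          ← ENNReal.ofReal_ofNat 2, ← ENNReal.ofReal_mul zero_le_two, ← hd]
        ring_nf

lemma IsGSPWiener.quantErr_le_sqrt_of_pow_le (hGW : IsGSPWiener k (Set.Icc 0 T) Z P) (hT : 0 < T)
    (hZ : Measurable (Function.uncurry Z)) (hX : AEStronglyMeasurable X P)
    (hXZ : ∀ᵐ ω ∂P, (X ω : ℝ → ℝ) =ᵐ[volume.restrict (Set.Icc 0 T)] fun t => Z t ω)
    {C d n : ℕ} (hC : 3 + 2 * k / T ≤ C) (hd : 0 < d) (hn : (2 ^ (C + 1) * 3) ^ d ≤ n) :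
    quantErr P X n ≤ √(8 * T ^ 2 / d) := by
  have hd' : (0 : ℝ) < d := Nat.cast_pos.2 hd
  have hh : 0 < T / d := by positivity
  have hcard : ((stepCodebook (volume.restrict (Set.Icc 0 T)) (T / d) √(T / d) d
      ((C + 1) * d)).card : ℝ) ≤ n :=
    card_stepCodebook_le.trans (by rw [pow_mul, ← mul_pow]; exact_mod_cast hn)
  have hL : d + (2 / √(T / d)) ^ 2 / 2 * (k + T) ≤ (C * d : ℝ) := by
    calc d + (2 / √(T / d)) ^ 2 / 2 * (k + T) = (3 + 2 * k / T) * d := by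
          rw [div_pow, Real.sq_sqrt hh.le]
          field_simp
          ring
      _ ≤ C * d := by gcongr
  refine quantErr_le_sqrt hX stepCodebook_nonempty (Nat.cast_le.1 hcard) (by positivity) <|
    (hGW.distortion_stepCodebook_le hZ hXZ hh.le (Real.sqrt_pos.2 hh) (mul_div_cancel₀ T hd'.ne')
      hL (by push_cast; linarith)).trans_eq ?_
  rw [Real.sq_sqrt hh.le]
  ring_nf

lemma IsGSPWiener.quantErr_le (hGW : IsGSPWiener k (Set.Icc 0 T) Z P) (hT : 0 < T)
    (hZ : Measurable (Function.uncurry Z)) (hX : AEStronglyMeasurable X P)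
    (hXZ : ∀ᵐ ω ∂P, (X ω : ℝ → ℝ) =ᵐ[volume.restrict (Set.Icc 0 T)] fun t => Z t ω)
    {C n : ℕ} (hC : 3 + 2 * k / T ≤ C) (hn : 2 ^ (C + 1) * 3 ≤ n) :
    quantErr P X n ≤ 4 * T * √(Real.log (2 ^ (C + 1) * 3 : ℕ)) / √(Real.log n) := by
  set b : ℕ := 2 ^ (C + 1) * 3
  have hb_one : 1 < b := by have := Nat.one_le_two_pow (n := C + 1); omega
  have hlog_pos : 0 < Nat.log b n := Nat.log_pos hb_one hn
  have hlog_n : 0 < Real.log n := Real.log_pos (by exact_mod_cast hb_one.trans_le hn)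
  have hlog_b : 0 < Real.log b := Real.log_pos (by exact_mod_cast hb_one)
  calc quantErr P X n ≤ √(8 * T ^ 2 / Nat.log b n) :=
        hGW.quantErr_le_sqrt_of_pow_le hT hZ hX hXZ hC hlog_pos
          (Nat.pow_log_le_self b (by omega))
    _ ≤ √((4 * T) ^ 2 * Real.log b / Real.log n) := by
        refine Real.sqrt_le_sqrt ((div_le_div_iff₀ (by exact_mod_cast hlog_pos) hlog_n).2 ?_)
        nlinarith [mul_le_mul_of_nonneg_left (log_le_two_mul_log_mul_natLog hb_one hn)
          (sq_nonneg T)]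
    _ = 4 * T * √(Real.log b) / √(Real.log n) := by
        rw [Real.sqrt_div (by positivity), Real.sqrt_mul (sq_nonneg _),
          Real.sqrt_sq (by positivity)]

end UpperBound

/-- For a GSP-Wiener process `Z` on `[0,T]` (centered Gaussian with covariance
`min (k+t) (k+s)`, a.s. continuous paths), viewed as an `L²([0,T])`-valued
random variable `X`, the quantization error satisfies
`e_n(Z) = Θ((ln n)^{-1/2})`. -/
theorem gsp_wiener_quantization_error_theta
    {Ω : Type*} [MeasurableSpace Ω] (P : Measure Ω) [IsProbabilityMeasure P]
    (T k : ℝ) (hT : 0 < T) (hk : 0 ≤ k)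
    (Z : ℝ → Ω → ℝ)
    (hGauss : ∀ (m : ℕ) (t : Fin m → ℝ), (∀ i, t i ∈ Set.Icc 0 T) →
      ∀ c : Fin m → ℝ,
        Measure.map (fun ω => ∑ i, c i * Z (t i) ω) P =
          gaussianReal 0
            (∑ i, ∑ j, c i * c j * min (k + t i) (k + t j)).toNNReal)
    (hcont : ∀ᵐ ω ∂P, ContinuousOn (fun t => Z t ω) (Set.Icc 0 T))
    (X : Ω → Lp ℝ 2 (volume.restrict (Set.Icc 0 T)))
    (hXmeas : AEStronglyMeasurable X P)
    (hXZ : ∀ᵐ ω ∂P,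
      (X ω : ℝ → ℝ) =ᵐ[volume.restrict (Set.Icc 0 T)] fun t => Z t ω) :
    ∃ C₁ C₂ : ℝ, ∃ N : ℕ, 0 < C₁ ∧ C₁ ≤ C₂ ∧
      ∀ n : ℕ, N ≤ n →
        C₁ / Real.sqrt (Real.log n) ≤ quantErr P X n ∧
          quantErr P X n ≤ C₂ / Real.sqrt (Real.log n) := by
  have hGW : IsGSPWiener k (Set.Icc 0 T) Z P :=
    .of_map_sum_eq_gaussianReal (fun t ht => add_nonneg hk ht.1) hGauss
  obtain ⟨Z', hZ', hGW', hagree⟩ := hGW.exists_measurable_uncurry hT.le hcont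
  have hXZ' : ∀ᵐ ω ∂P,
      (X ω : ℝ → ℝ) =ᵐ[volume.restrict (Set.Icc 0 T)] fun t => Z' t ω := by
    filter_upwards [hXZ, hagree] with ω hX hω
    exact hX.trans ((ae_restrict_mem measurableSet_Icc).mono hω)
  obtain ⟨C, hC⟩ := exists_nat_ge (3 + 2 * k / T)
  let b : ℕ := 2 ^ (C + 1) * 3
  refine ⟨T / 48, max (T / 48) (4 * T * √(Real.log b)), b, by positivity, le_max_left _ _,
    fun n hn => ⟨?_, ?_⟩⟩
  · exact hGW'.le_quantErr hT hZ' hXmeas hXZ' ((Nat.le_mul_of_pos_left 3 (by positivity)).trans hn)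
  · refine (hGW'.quantErr_le hT hZ' hXmeas hXZ' hC hn).trans ?_
    gcongr
    exact le_max_right _ _
end
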